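/- arXiv:2005.06207 — 8 statements merged into one kernel-verified Lean document; each statement's English description precedes it below -/
import Mathlib

section
/- Let f₁ : ℝⁿ → (−∞,+∞] be proper and f₂ : ℝⁿ → ℝ. Define ρ : ℝⁿ → (−∞,+∞] by ρ(x) = f₁(x)/f₂(x) if x ∈ dom(f₁) and f₂(x) ≠ 0, and ρ(x) = +∞ otherwise. Let x ∈ dom(ρ), set a₁ := f₁(x) and a₂ := f₂(x), and assume a₂ > 0. If f₁ is continuous at x relative to dom(f₁) and f₂ satisfies the calmness condition at x, then ∂̂ρ(x) = { w/a₂² : w ∈ ∂̂(a₂·f₁ − a₁·f₂)(x) }. If, in addition, f₂ is differentiable at x, then ∂̂ρ(x) = { (a₂·v − a₁·∇f₂(x))/a₂² : v ∈ ∂̂f₁(x) }. -/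
open Filter Topology
open scoped RealInnerProductSpace

noncomputable section

/-- The Fréchet subdifferential of an extended-real-valued function `φ` at `x`:
the set of `y` with `liminf_{z→x, z≠x} (φ z − φ x − ⟨y, z−x⟩)/‖z−x‖ ≥ 0`,
empty when `φ x = +∞`. -/
def fsub {n : ℕ} (φ : EuclideanSpace ℝ (Fin n) → EReal) (x : EuclideanSpace ℝ (Fin n)) :
    Set (EuclideanSpace ℝ (Fin n)) :=
  {y | φ x ≠ ⊤ ∧
    0 ≤ liminf (fun z => (φ z - φ x - ((⟪y, z - x⟫ : ℝ) : EReal)) / ((‖z - x‖ : ℝ) : EReal))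
      (𝓝[≠] x)}

def fineq {n : ℕ} (x : EuclideanSpace ℝ (Fin n)) (D : Set (EuclideanSpace ℝ (Fin n)))
    (g : EuclideanSpace ℝ (Fin n) → ℝ) : Prop :=
  ∀ ε > (0 : ℝ), ∀ᶠ z in 𝓝[D] x, -(ε * ‖z - x‖) ≤ g z

lemma fineq_of {n : ℕ} {x : EuclideanSpace ℝ (Fin n)} {D : Set (EuclideanSpace ℝ (Fin n))}
    {g h : EuclideanSpace ℝ (Fin n) → ℝ} {c : ℝ} (hc : 0 < c)
    (ho : (fun z => g z - c * h z) =o[𝓝[D] x] (fun z => z - x)) (H : fineq x D h) :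
    fineq x D g := by
  intro ε hε
  have h1 := H (ε / (2 * c)) (by positivity)
  have h2 := ho.bound (half_pos hε)
  filter_upwards [h1, h2] with z h1 h2
  rw [Real.norm_eq_abs, abs_le] at h2
  have h3 := mul_le_mul_of_nonneg_left h1 hc.le
  have h4 : c * -(ε / (2 * c) * ‖z - x‖) = -(ε / 2 * ‖z - x‖) := by field_simp
  rw [h4] at h3
  linarith [h2.1]

lemma fineq_iff {n : ℕ} {x : EuclideanSpace ℝ (Fin n)} {D : Set (EuclideanSpace ℝ (Fin n))}
    {g h : EuclideanSpace ℝ (Fin n) → ℝ} {c : ℝ} (hc : 0 < c)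
    (ho : (fun z => g z - c * h z) =o[𝓝[D] x] (fun z => z - x)) :
    fineq x D g ↔ fineq x D h := by
  refine ⟨fineq_of (inv_pos.2 hc) ?_, fineq_of hc ho⟩
  refine (ho.const_mul_left (-c⁻¹)).congr_left ?_
  intro z
  field_simp
  ring

lemma fsub_iff {n : ℕ} {x : EuclideanSpace ℝ (Fin n)} {D : Set (EuclideanSpace ℝ (Fin n))}
    {φ : EuclideanSpace ℝ (Fin n) → EReal} {g : EuclideanSpace ℝ (Fin n) → ℝ}
    (hx : φ x = g x)
    (h1 : ∀ᶠ z in 𝓝 x, z ∈ D → φ z = g z) (h2 : ∀ᶠ z in 𝓝 x, z ∉ D → φ z = ⊤)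
    (y : EuclideanSpace ℝ (Fin n)) :
    y ∈ fsub φ x ↔ fineq x D (fun z => g z - g x - ⟪y, z - x⟫) := by
  have key : ∀ z, z ≠ x → φ z = g z →
      (φ z - φ x - ((⟪y, z - x⟫ : ℝ) : EReal)) / ((‖z - x‖ : ℝ) : EReal)
        = (((g z - g x - ⟪y, z - x⟫) / ‖z - x‖ : ℝ) : EReal) := by
    intro z hz h
    rw [h, hx]
    push_cast
    rfl
  have keyt : ∀ z, z ≠ x → φ z = ⊤ →
      (φ z - φ x - ((⟪y, z - x⟫ : ℝ) : EReal)) / ((‖z - x‖ : ℝ) : EReal) = ⊤ := by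
    intro z hz h
    have : 0 < ‖z - x‖ := norm_pos_iff.2 (sub_ne_zero.2 hz)
    rw [h, hx, EReal.top_sub_coe, EReal.top_sub_coe]
    exact EReal.top_div_of_pos_ne_top (by exact_mod_cast this) (EReal.coe_ne_top _)
  have hne : φ x ≠ ⊤ := by rw [hx]; exact EReal.coe_ne_top _
  unfold fsub fineq
  rw [Set.mem_setOf_eq]
  simp only [hne, ne_eq, not_false_eq_true, true_and]
  rw [le_liminf_iff]
  constructor
  · intro H ε hε
    have H' := H ((-ε : ℝ) : EReal) (by exact_mod_cast neg_lt_zero.2 hε)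
    rw [eventually_nhdsWithin_iff] at H' ⊢
    filter_upwards [H', h1] with z H' h1 hz
    by_cases hzx : z = x
    · subst hzx; simp
    · have := H' hzx
      rw [key z hzx (h1 hz), EReal.coe_lt_coe_iff, lt_div_iff₀ (norm_pos_iff.2 (sub_ne_zero.2 hzx))] at this
      linarith
  · intro H b hb
    obtain ⟨r, hr1, hr2⟩ := EReal.lt_iff_exists_real_btwn.1 hb
    have hr0 : r < 0 := by exact_mod_cast hr2
    have H' := H (-r) (by linarith)
    rw [eventually_nhdsWithin_iff] at H' ⊢
    filter_upwards [H', h1, h2] with z H' h1 h2 hzx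
    by_cases hz : z ∈ D
    · rw [key z hzx (h1 hz)]
      refine hr1.trans_le ?_
      rw [EReal.coe_le_coe_iff, le_div_iff₀ (norm_pos_iff.2 (sub_ne_zero.2 hzx))]
      have := H' hz
      linarith
    · rw [keyt z hzx (h2 hz)]
      exact hr1.trans (EReal.coe_lt_top r)

/-- Proposition 2.2 (quotient rule for the Fréchet subdifferential). -/
theorem quotient_rule_frechet_subdifferential
    {n : ℕ} (hn : 1 ≤ n)
    (f₁ : EuclideanSpace ℝ (Fin n) → EReal) (f₂ : EuclideanSpace ℝ (Fin n) → ℝ)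
    (hf₁_ne_bot : ∀ z, f₁ z ≠ ⊥) (hf₁_proper : ∃ z, f₁ z ≠ ⊤)
    (ρ : EuclideanSpace ℝ (Fin n) → EReal)
    (hρ : ∀ z, ρ z = if f₁ z ≠ ⊤ ∧ f₂ z ≠ 0 then (((f₁ z).toReal / f₂ z : ℝ) : EReal) else ⊤)
    (x : EuclideanSpace ℝ (Fin n)) (hx : ρ x ≠ ⊤)
    (a₁ a₂ : ℝ) (ha₁ : a₁ = (f₁ x).toReal) (ha₂ : a₂ = f₂ x) (ha₂_pos : 0 < a₂)
    (hf₁_cont : ContinuousWithinAt f₁ {z | f₁ z ≠ ⊤} x)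
    (hf₂_calm : ∃ κ > (0 : ℝ), ∀ᶠ u in 𝓝 x, |f₂ u - f₂ x| ≤ κ * ‖u - x‖) :
    fsub ρ x =
      (fun w => (a₂ ^ 2)⁻¹ • w) ''
        fsub (fun z => ((a₂ : ℝ) : EReal) * f₁ z - ((a₁ * f₂ z : ℝ) : EReal)) x ∧
    (∀ v₂ : EuclideanSpace ℝ (Fin n), HasGradientAt f₂ v₂ x →
      fsub ρ x = (fun v => (a₂ ^ 2)⁻¹ • (a₂ • v - a₁ • v₂)) '' fsub f₁ x) := by
  obtain ⟨κ, hκ, hcalm⟩ := hf₂_calm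
  have hx1 : f₁ x ≠ ⊤ ∧ f₂ x ≠ 0 := by
    by_contra h
    exact hx (by rw [hρ, if_neg h])
  set D : Set (EuclideanSpace ℝ (Fin n)) := {z | f₁ z ≠ ⊤} with hD
  set F : EuclideanSpace ℝ (Fin n) → ℝ := fun z => (f₁ z).toReal with hF
  have hFz : ∀ z ∈ D, f₁ z = (F z : EReal) := fun z hz =>
    (EReal.coe_toReal hz (hf₁_ne_bot z)).symm
  have hFx : F x = a₁ := ha₁.symm
  have hbig : (fun z => f₂ z - f₂ x) =O[𝓝 x] (fun z => z - x) := by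
    refine Asymptotics.IsBigO.of_bound κ ?_
    simpa [Real.norm_eq_abs] using hcalm
  have hcont2 : Tendsto f₂ (𝓝 x) (𝓝 a₂) := by
    have h0 : Tendsto (fun z => z - x) (𝓝 x) (𝓝 0) := by
      have : Continuous (fun z : EuclideanSpace ℝ (Fin n) => z - x) := by fun_prop
      simpa using this.tendsto x
    have := (hbig.trans_tendsto h0).add_const (f₂ x)
    simpa [ha₂] using this
  have hpos : ∀ᶠ z in 𝓝 x, 0 < f₂ z := hcont2.eventually (lt_mem_nhds ha₂_pos)
  have hcontF : Tendsto F (𝓝[D] x) (𝓝 a₁) := by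
    rw [ha₁]
    exact (EReal.tendsto_toReal hx1.1 (hf₁_ne_bot x)).comp hf₁_cont
  have iρ : ∀ y, y ∈ fsub ρ x ↔
      fineq x D (fun z => F z / f₂ z - F x / f₂ x - ⟪y, z - x⟫) := by
    refine fsub_iff (g := fun z => F z / f₂ z) ?_ ?_ ?_
    · rw [hρ, if_pos hx1]
    · filter_upwards [hpos] with z hz hzD
      rw [hρ, if_pos ⟨hzD, hz.ne'⟩]
    · filter_upwards with z hzD
      rw [hρ, if_neg (fun h => hzD h.1)]
  have iN : ∀ y, y ∈ fsub (fun z => ((a₂ : ℝ) : EReal) * f₁ z - ((a₁ * f₂ z : ℝ) : EReal)) x ↔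
      fineq x D (fun z => (a₂ * F z - a₁ * f₂ z) - (a₂ * F x - a₁ * f₂ x) - ⟪y, z - x⟫) := by
    refine fsub_iff (g := fun z => a₂ * F z - a₁ * f₂ z) ?_ ?_ ?_
    · simp only [hFz x hx1.1]
      push_cast
      rfl
    · filter_upwards with z hzD
      simp only [hFz z hzD]
      push_cast
      rfl
    · filter_upwards with z hzD
      have : f₁ z = ⊤ := by simpa [hD] using hzD
      simp only [this, EReal.coe_mul_top_of_pos ha₂_pos, EReal.top_sub_coe]
  have i1 : ∀ y, y ∈ fsub f₁ x ↔ fineq x D (fun z => F z - F x - ⟪y, z - x⟫) := by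
    refine fsub_iff (hFz x hx1.1) ?_ ?_
    · filter_upwards with z hzD using hFz z hzD
    · filter_upwards with z hzD
      simpa [hD] using hzD
  have e1 : ∀ w, (a₂ ^ 2)⁻¹ • w ∈ fsub ρ x ↔
      w ∈ fsub (fun z => ((a₂ : ℝ) : EReal) * f₁ z - ((a₁ * f₂ z : ℝ) : EReal)) x := by
    intro w
    rw [iρ, iN]
    refine fineq_iff (c := (a₂ ^ 2)⁻¹) (by positivity) ?_
    have hT : Tendsto (fun z => -(a₂ * F z - a₁ * f₂ z) / (a₂ ^ 2 * f₂ z)) (𝓝[D] x) (𝓝 0) := by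
      have h2 : Tendsto f₂ (𝓝[D] x) (𝓝 a₂) := hcont2.mono_left nhdsWithin_le_nhds
      have := (((hcontF.const_mul a₂).sub (h2.const_mul a₁)).neg).div (h2.const_mul (a₂ ^ 2))
        (by positivity)
      have e : -(a₂ * a₁ - a₁ * a₂) / (a₂ ^ 2 * a₂) = 0 := by
        rw [mul_comm a₂ a₁]; simp
      rwa [e] at this
    have ho := ((Asymptotics.isLittleO_one_iff ℝ).2 hT).mul_isBigO
      (hbig.norm_right.mono (nhdsWithin_le_nhds (s := D)))
    simp only [one_mul] at ho
    refine ho.of_norm_right.congr' ?_ EventuallyEq.rfl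
    filter_upwards [nhdsWithin_le_nhds hpos] with z hz
    have hz' : f₂ z ≠ 0 := ne_of_gt hz
    rw [real_inner_smul_left, hFx, ← ha₂]
    field_simp
    ring
  have E1 : fsub ρ x =
      (fun w => (a₂ ^ 2)⁻¹ • w) ''
        fsub (fun z => ((a₂ : ℝ) : EReal) * f₁ z - ((a₁ * f₂ z : ℝ) : EReal)) x := by
    ext y
    constructor
    · intro hy
      have hy2 : (a₂ ^ 2)⁻¹ • ((a₂ ^ 2) • y) = y := inv_smul_smul₀ (by positivity) y
      exact ⟨(a₂ ^ 2) • y, (e1 _).1 (by rwa [hy2]), hy2⟩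
    · rintro ⟨w, hw, rfl⟩
      exact (e1 w).2 hw
  refine ⟨E1, fun v₂ hv₂ => ?_⟩
  have e2 : ∀ v, a₂ • v - a₁ • v₂ ∈
      fsub (fun z => ((a₂ : ℝ) : EReal) * f₁ z - ((a₁ * f₂ z : ℝ) : EReal)) x ↔
      v ∈ fsub f₁ x := by
    intro v
    rw [i1, iN]
    refine fineq_iff (c := a₂) ha₂_pos ?_
    have ho := ((hasGradientAt_iff_isLittleO.1 hv₂).mono
      (nhdsWithin_le_nhds (s := D))).const_mul_left (-a₁)
    refine ho.congr_left ?_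
    intro z
    rw [inner_sub_left, real_inner_smul_left, real_inner_smul_left]
    ring
  rw [E1]
  ext y
  constructor
  · rintro ⟨w, hw, rfl⟩
    have hw2 : a₂ • (a₂⁻¹ • (w + a₁ • v₂)) - a₁ • v₂ = w := by
      rw [smul_inv_smul₀ ha₂_pos.ne']; simp
    refine ⟨a₂⁻¹ • (w + a₁ • v₂), (e2 _).1 (by rwa [hw2]), ?_⟩
    simp only [hw2]
  · rintro ⟨v, hv, rfl⟩
    exact ⟨_, (e2 v).2 hv, rfl⟩
end
end

section
/- Suppose the standing assumptions on f, g, h, Ω, F hold. Let x⋆ ∈ dom(F), set c⋆ := F(x⋆), and suppose x⋆ is a local minimizer of x ↦ f(x) + h(x) − c⋆·g(x) on Ω. Then there exists δ > 0 such that for every x ∈ dom(F) with ‖x − x⋆‖₂ < δ and every y⋆ ∈ ∂g(x⋆): f(x⋆) ≤ f(x) + ⟨∇h(x⋆) − c⋆·y⋆, x − x⋆⟩ + (L/2)·‖x − x⋆‖₂². -/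
open Filter Topology
open scoped RealInnerProductSpace

noncomputable section

/-- The limiting (Mordukhovich) subdifferential. -/
def lsub {n : ℕ} (φ : EuclideanSpace ℝ (Fin n) → EReal) (x : EuclideanSpace ℝ (Fin n)) :
    Set (EuclideanSpace ℝ (Fin n)) :=
  {y | ∃ u : ℕ → EuclideanSpace ℝ (Fin n), ∃ v : ℕ → EuclideanSpace ℝ (Fin n),
      Tendsto u atTop (𝓝 x) ∧ Tendsto (fun k => φ (u k)) atTop (𝓝 (φ x)) ∧
      (∀ k, v k ∈ fsub φ (u k)) ∧ Tendsto v atTop (𝓝 y)}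

/-- The subdifferential of a convex real-valued function. -/
def csub {n : ℕ} (g : EuclideanSpace ℝ (Fin n) → ℝ) (x : EuclideanSpace ℝ (Fin n)) :
    Set (EuclideanSpace ℝ (Fin n)) :=
  {y | ∀ z, g x + ⟪y, z - x⟫ ≤ g z}

/-- The (possibly set-valued) proximity operator of a proper lsc extended-real-valued
function `ψ` at `u`. -/
def proxSet {n : ℕ} (ψ : EuclideanSpace ℝ (Fin n) → EReal) (u : EuclideanSpace ℝ (Fin n)) :
    Set (EuclideanSpace ℝ (Fin n)) :=
  {y | ∀ z, ψ y + ((‖y - u‖ ^ 2 / 2 : ℝ) : EReal) ≤ ψ z + ((‖z - u‖ ^ 2 / 2 : ℝ) : EReal)}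

/-- The fractional objective `F = (f+h)/g` on `Ω ∩ dom f`, `+∞` elsewhere. -/
def Ffrac {n : ℕ} (f : EuclideanSpace ℝ (Fin n) → EReal) (g h : EuclideanSpace ℝ (Fin n) → ℝ) :
    EuclideanSpace ℝ (Fin n) → EReal :=
  fun x => if g x ≠ 0 ∧ f x ≠ ⊤ then ((((f x).toReal + h x) / g x : ℝ) : EReal) else ⊤

/-- The descent lemma for a function with Lipschitz gradient. -/
theorem descent_aux {n : ℕ} (h : EuclideanSpace ℝ (Fin n) → ℝ)
    (h' : EuclideanSpace ℝ (Fin n) → EuclideanSpace ℝ (Fin n)) (L : ℝ) (hL : 0 < L)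
    (hh_grad : ∀ z, HasGradientAt h (h' z) z)
    (hh_lip : LipschitzWith (Real.toNNReal L) h') (a x : EuclideanSpace ℝ (Fin n)) :
    h x ≤ h a + ⟪h' a, x - a⟫ + L / 2 * ‖x - a‖ ^ 2 := by
  set d := x - a with hd
  have hder : ∀ t : ℝ, HasDerivAt
      (fun t : ℝ => h (a + t • d) - t * ⟪h' a, d⟫ - L / 2 * ‖d‖ ^ 2 * t ^ 2)
      (⟪h' (a + t • d), d⟫ - ⟪h' a, d⟫ - L / 2 * ‖d‖ ^ 2 * (2 * t)) t := by
    intro t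
    have h1 : HasDerivAt (fun t : ℝ => a + t • d) d t := by
      simpa using ((hasDerivAt_id t).smul_const d).const_add a
    have h2 : HasDerivAt (fun t : ℝ => h (a + t • d)) ⟪h' (a + t • d), d⟫ t := by
      have := (hh_grad (a + t • d)).hasFDerivAt.comp_hasDerivAt t h1
      rw [InnerProductSpace.toDual_apply_apply] at this
      exact this
    have h3 : HasDerivAt (fun t : ℝ => t * ⟪h' a, d⟫) ⟪h' a, d⟫ t := by
      simpa using (hasDerivAt_id t).mul_const ⟪h' a, d⟫
    have h4 : HasDerivAt (fun t : ℝ => L / 2 * ‖d‖ ^ 2 * t ^ 2)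
        (L / 2 * ‖d‖ ^ 2 * (2 * t)) t := by
      simpa using (hasDerivAt_pow 2 t).const_mul (L / 2 * ‖d‖ ^ 2)
    exact (h2.sub h3).sub h4
  have hanti := antitoneOn_of_deriv_nonpos (convex_Icc (0 : ℝ) 1)
    (fun t _ => (hder t).continuousAt.continuousWithinAt)
    (fun t _ => (hder t).differentiableAt.differentiableWithinAt)
    (by
      intro t ht
      rw [interior_Icc] at ht
      rw [(hder t).deriv, ← inner_sub_left]
      have h5 := real_inner_le_norm (h' (a + t • d) - h' a) d
      have h6 := hh_lip.dist_le_mul (a + t • d) a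
      rw [dist_eq_norm, dist_eq_norm, Real.coe_toNNReal L hL.le, add_sub_cancel_left,
        norm_smul, Real.norm_of_nonneg ht.1.le] at h6
      have h7 := mul_le_mul_of_nonneg_right h6 (norm_nonneg d)
      nlinarith)
  have h8 := hanti (Set.left_mem_Icc.2 zero_le_one) (Set.right_mem_Icc.2 zero_le_one) zero_le_one
  have h9 : a + d = x := by rw [hd]; abel
  simp only [one_smul, zero_smul, add_zero, h9] at h8
  linarith

/-- Lemma 3.2: the key inequality at a local minimizer of the parametric problem. -/
theorem key_inequality_at_parametric_local_min
    {n : ℕ} (hn : 1 ≤ n)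
    (f : EuclideanSpace ℝ (Fin n) → EReal) (g h : EuclideanSpace ℝ (Fin n) → ℝ)
    (h' : EuclideanSpace ℝ (Fin n) → EuclideanSpace ℝ (Fin n)) (L : ℝ)
    (hf_ne_bot : ∀ z, f z ≠ ⊥) (hf_proper : ∃ z, f z ≠ ⊤)
    (hf_lsc : LowerSemicontinuous f)
    (hf_bdd : ∃ m : ℝ, ∀ z, (m : EReal) ≤ f z)
    (hf_cont : ContinuousOn f {z | f z ≠ ⊤})
    (hg_cvx : ConvexOn ℝ Set.univ g)
    (hL : 0 < L)
    (hh_grad : ∀ z, HasGradientAt h (h' z) z)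
    (hh_lip : LipschitzWith (Real.toNNReal L) h')
    (hΩ : ∃ z, g z ≠ 0)
    (hfh : ∀ z, 0 ≤ f z + ((h z : ℝ) : EReal))
    (hg_pos : ∀ z, f z ≠ ⊤ → g z ≠ 0 → 0 < g z)
    (xs : EuclideanSpace ℝ (Fin n)) (hxs : g xs ≠ 0 ∧ f xs ≠ ⊤)
    (cs : ℝ) (hcs : cs = (Ffrac f g h xs).toReal)
    (hmin : ∃ δ > (0 : ℝ), ∀ x, g x ≠ 0 → ‖x - xs‖ < δ →
      f xs + ((h xs - cs * g xs : ℝ) : EReal) ≤ f x + ((h x - cs * g x : ℝ) : EReal)) :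
    ∃ δ > (0 : ℝ), ∀ x, g x ≠ 0 ∧ f x ≠ ⊤ → ‖x - xs‖ < δ →
      ∀ ys ∈ csub g xs,
        f xs ≤ f x + ((⟪h' xs - cs • ys, x - xs⟫ + L / 2 * ‖x - xs‖ ^ 2 : ℝ) : EReal) := by
  have hc : 0 ≤ cs := by
    rw [hcs, Ffrac, if_pos hxs, EReal.toReal_coe]
    have h1 := hfh xs
    rw [← EReal.coe_toReal hxs.2 (hf_ne_bot xs)] at h1
    exact div_nonneg (by exact_mod_cast h1) (hg_pos xs hxs.2 hxs.1).le
  obtain ⟨δ, hδ, hm⟩ := hmin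
  refine ⟨δ, hδ, fun x hx hxd ys hys => ?_⟩
  have h1 := hm x hx.1 hxd
  have h2 := descent_aux h h' L hL hh_grad hh_lip xs x
  have h3 := mul_le_mul_of_nonneg_left (hys x) hc
  rw [← EReal.coe_toReal hxs.2 (hf_ne_bot xs), ← EReal.coe_toReal hx.2 (hf_ne_bot x)] at h1 ⊢
  rw [← EReal.coe_add, ← EReal.coe_add, EReal.coe_le_coe_iff] at h1
  rw [← EReal.coe_add, EReal.coe_le_coe_iff, inner_sub_left, real_inner_smul_left]
  linarith
end
end

section
/- Suppose the standing assumptions on f, g, h, Ω, F hold. If x⋆ ∈ dom(F) is a local minimizer of F on ℝⁿ and c⋆ := F(x⋆), then c⋆·∂g(x⋆) ⊆ ∂̂f(x⋆) + ∇h(x⋆); that is, for every y⋆ ∈ ∂g(x⋆) one has c⋆·y⋆ − ∇h(x⋆) ∈ ∂̂f(x⋆). -/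
open Filter Topology
open scoped RealInnerProductSpace

noncomputable section

/-- Theorem 3.3: first-order necessary optimality condition
c⋆·∂g(x⋆) ⊆ ∂̂f(x⋆) + ∇h(x⋆) at a local minimizer x⋆ of F. -/
theorem first_order_necessary_condition
    {n : ℕ} (hn : 1 ≤ n)
    (f : EuclideanSpace ℝ (Fin n) → EReal) (g h : EuclideanSpace ℝ (Fin n) → ℝ)
    (h' : EuclideanSpace ℝ (Fin n) → EuclideanSpace ℝ (Fin n)) (L : ℝ)
    (hf_ne_bot : ∀ z, f z ≠ ⊥) (hf_proper : ∃ z, f z ≠ ⊤)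
    (hf_lsc : LowerSemicontinuous f)
    (hf_bdd : ∃ m : ℝ, ∀ z, (m : EReal) ≤ f z)
    (hf_cont : ContinuousOn f {z | f z ≠ ⊤})
    (hg_cvx : ConvexOn ℝ Set.univ g)
    (hL : 0 < L)
    (hh_grad : ∀ z, HasGradientAt h (h' z) z)
    (hh_lip : LipschitzWith (Real.toNNReal L) h')
    (hΩ : ∃ z, g z ≠ 0)
    (hfh : ∀ z, 0 ≤ f z + ((h z : ℝ) : EReal))
    (hg_pos : ∀ z, f z ≠ ⊤ → g z ≠ 0 → 0 < g z)
    (xs : EuclideanSpace ℝ (Fin n)) (hxs : g xs ≠ 0 ∧ f xs ≠ ⊤)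
    (cs : ℝ) (hcs : cs = (Ffrac f g h xs).toReal)
    (hmin : ∃ δ > (0 : ℝ), ∀ x, ‖x - xs‖ < δ → Ffrac f g h xs ≤ Ffrac f g h x) :
    ∀ ys ∈ csub g xs, cs • ys - h' xs ∈ fsub f xs := by
  intro ys hys
  obtain ⟨δ, hδ, hmin⟩ := hmin
  refine ⟨hxs.2, ?_⟩
  have hgx : 0 < g xs := hg_pos xs hxs.2 hxs.1
  have hFx : Ffrac f g h xs = ((((f xs).toReal + h xs) / g xs : ℝ) : EReal) := by
    unfold Ffrac
    rw [if_pos hxs]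
  have hnn : ∀ z, f z ≠ ⊤ → 0 ≤ (f z).toReal + h z := by
    intro z hz
    have h1 := hfh z
    rw [← EReal.coe_toReal hz (hf_ne_bot z)] at h1
    exact_mod_cast h1
  have hc : cs = ((f xs).toReal + h xs) / g xs := by
    rw [hcs, hFx, EReal.toReal_coe]
  have hc0 : 0 ≤ cs := by
    rw [hc]
    exact div_nonneg (hnn xs hxs.2) hgx.le
  have hcg : cs * g xs = (f xs).toReal + h xs := by
    rw [hc]
    field_simp
  have key : ∀ z, ‖z - xs‖ < δ → f z ≠ ⊤ → cs * g z ≤ (f z).toReal + h z := by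
    intro z hz hfz
    by_cases hgz : g z = 0
    · rw [hgz, mul_zero]
      exact hnn z hfz
    · have h1 := hmin z hz
      have hFz : Ffrac f g h z = ((((f z).toReal + h z) / g z : ℝ) : EReal) := by
        unfold Ffrac
        rw [if_pos ⟨hgz, hfz⟩]
      rw [hFx, hFz, EReal.coe_le_coe_iff, ← hc] at h1
      exact (le_div_iff₀ (hg_pos z hfz hgz)).1 h1
  refine le_of_forall_lt_imp_le_of_dense fun c hc' => ?_
  obtain ⟨r, hcr, hr0⟩ := EReal.lt_iff_exists_real_btwn.1 hc'
  refine hcr.le.trans ?_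
  have hr : 0 < -r := by
    have : r < 0 := by exact_mod_cast hr0
    linarith
  have hlo := (hasGradientAt_iff_isLittleO.1 (hh_grad xs)).def hr
  have hball : ∀ᶠ z in 𝓝 xs, ‖z - xs‖ < δ := by
    filter_upwards [Metric.ball_mem_nhds xs hδ] with z hz
    rwa [mem_ball_iff_norm] at hz
  refine le_liminf_of_le (by isBoundedDefault) ?_
  filter_upwards [hlo.filter_mono nhdsWithin_le_nhds, hball.filter_mono nhdsWithin_le_nhds,
    self_mem_nhdsWithin] with z h1 h2 h3
  have hpos : 0 < ‖z - xs‖ := norm_pos_iff.2 (sub_ne_zero.2 h3)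
  rw [EReal.le_div_iff_mul_le (by exact_mod_cast hpos) (EReal.coe_ne_top _)]
  by_cases hfz : f z = ⊤
  · rw [hfz, ← EReal.coe_toReal hxs.2 (hf_ne_bot xs), EReal.top_sub_coe, EReal.top_sub_coe]
    exact le_top
  · rw [← EReal.coe_toReal hxs.2 (hf_ne_bot xs), ← EReal.coe_toReal hfz (hf_ne_bot z)]
    have h4 := key z h2 hfz
    have h5 := mul_le_mul_of_nonneg_left (hys z) hc0
    rw [Real.norm_eq_abs] at h1
    have h6 := (abs_le.1 h1).2
    have h7 : ⟪cs • ys - h' xs, z - xs⟫ = cs * ⟪ys, z - xs⟫ - ⟪h' xs, z - xs⟫ := by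
      rw [inner_sub_left, real_inner_smul_left]
    rw [h7]
    have h8 : r * ‖z - xs‖ ≤ (f z).toReal - (f xs).toReal
        - (cs * ⟪ys, z - xs⟫ - ⟪h' xs, z - xs⟫) := by
      rw [mul_add, hcg] at h5
      linarith
    exact_mod_cast h8
end
end

section
/- Suppose the standing assumptions on f, g, h, Ω, F hold. Let x⋆ ∈ dom(F) and c⋆ := F(x⋆). If there exist α > 0 and y⋆ ∈ ∂g(x⋆) such that x⋆ ∈ prox_{α·f}(x⋆ − α·∇h(x⋆) + α·c⋆·y⋆), then c⋆·y⋆ − ∇h(x⋆) ∈ ∂̂f(x⋆); in particular, x⋆ is a critical point of F, i.e., 0 ∈ ∂̂f(x⋆) + ∇h(x⋆) − c⋆·∂g(x⋆). -/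
open Filter Topology
open scoped RealInnerProductSpace

noncomputable section

/-- Proposition 4.1: a fixed point of the proximity-gradient-subgradient map is a
critical point of F. -/
theorem prox_fixed_point_is_critical
    {n : ℕ} (hn : 1 ≤ n)
    (f : EuclideanSpace ℝ (Fin n) → EReal) (g h : EuclideanSpace ℝ (Fin n) → ℝ)
    (h' : EuclideanSpace ℝ (Fin n) → EuclideanSpace ℝ (Fin n)) (L : ℝ)
    (hf_ne_bot : ∀ z, f z ≠ ⊥) (hf_proper : ∃ z, f z ≠ ⊤)
    (hf_lsc : LowerSemicontinuous f)
    (hf_bdd : ∃ m : ℝ, ∀ z, (m : EReal) ≤ f z)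
    (hf_cont : ContinuousOn f {z | f z ≠ ⊤})
    (hg_cvx : ConvexOn ℝ Set.univ g)
    (hL : 0 < L)
    (hh_grad : ∀ z, HasGradientAt h (h' z) z)
    (hh_lip : LipschitzWith (Real.toNNReal L) h')
    (hΩ : ∃ z, g z ≠ 0)
    (hfh : ∀ z, 0 ≤ f z + ((h z : ℝ) : EReal))
    (hg_pos : ∀ z, f z ≠ ⊤ → g z ≠ 0 → 0 < g z)
    (xs : EuclideanSpace ℝ (Fin n)) (hxs : g xs ≠ 0 ∧ f xs ≠ ⊤)
    (cs : ℝ) (hcs : cs = (Ffrac f g h xs).toReal)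
    (α : ℝ) (hα : 0 < α) (ys : EuclideanSpace ℝ (Fin n)) (hys : ys ∈ csub g xs)
    (hfix : xs ∈ proxSet (fun z => ((α : ℝ) : EReal) * f z)
      (xs - α • h' xs + (α * cs) • ys)) :
    cs • ys - h' xs ∈ fsub f xs ∧
      (0 : EuclideanSpace ℝ (Fin n)) ∈
        {w | ∃ a ∈ fsub f xs, ∃ y ∈ csub g xs, w = a + h' xs - cs • y} := by
  have key : cs • ys - h' xs ∈ fsub f xs := by
    refine ⟨hxs.2, ?_⟩
    set v := cs • ys - h' xs with hv
    have hu : xs - α • h' xs + (α * cs) • ys = xs + α • v := by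
      rw [hv, smul_sub, smul_smul]; abel
    rw [hu] at hfix
    obtain ⟨a, ha⟩ : ∃ a : ℝ, f xs = a :=
      ⟨(f xs).toReal, (EReal.coe_toReal hxs.2 (hf_ne_bot xs)).symm⟩
    have hreal : ∀ z, ∀ b : ℝ, f z = b →
        -(‖z - xs‖ ^ 2 / (2 * α)) ≤ b - a - ⟪v, z - xs⟫ := by
      intro z b hb
      have h1 := hfix z
      simp only [ha, hb] at h1
      have h2 : α * a + ‖xs - (xs + α • v)‖ ^ 2 / 2
          ≤ α * b + ‖z - (xs + α • v)‖ ^ 2 / 2 := by exact_mod_cast h1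
      have e1 : xs - (xs + α • v) = -(α • v) := by abel
      have e2 : z - (xs + α • v) = (z - xs) - α • v := by abel
      rw [e1, e2, norm_neg, norm_sub_sq_real, inner_smul_right,
        real_inner_comm] at h2
      have h3 : -(‖z - xs‖ ^ 2 / (2 * α)) = -(‖z - xs‖ ^ 2 / 2) / α := by
        field_simp
      rw [h3, div_le_iff₀ hα]
      linarith
    have hquot : ∀ z, z ≠ xs → ((-(‖z - xs‖ / (2 * α)) : ℝ) : EReal) ≤
        (f z - f xs - ((⟪v, z - xs⟫ : ℝ) : EReal)) / ((‖z - xs‖ : ℝ) : EReal) := by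
      intro z hz
      have hpos : 0 < ‖z - xs‖ := norm_pos_iff.2 (sub_ne_zero.2 hz)
      by_cases ht : f z = ⊤
      · rw [ht, ha, EReal.top_sub_coe, EReal.top_sub_coe,
          EReal.top_div_of_pos_ne_top (by exact_mod_cast hpos) (EReal.coe_ne_top _)]
        exact le_top
      · obtain ⟨b, hb⟩ : ∃ b : ℝ, f z = b :=
          ⟨(f z).toReal, (EReal.coe_toReal ht (hf_ne_bot z)).symm⟩
        have h1 := hreal z b hb
        rw [hb, ha, ← EReal.coe_sub, ← EReal.coe_sub, ← EReal.coe_div, EReal.coe_le_coe_iff,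
          le_div_iff₀ hpos]
        have h3 : -(‖z - xs‖ / (2 * α)) * ‖z - xs‖ = -(‖z - xs‖ ^ 2 / (2 * α)) := by ring
        rw [h3]; exact h1
    have htend : Tendsto (fun z => ((-(‖z - xs‖ / (2 * α)) : ℝ) : EReal)) (𝓝[≠] xs)
        (𝓝 (0 : EReal)) := by
      have hc : Continuous (fun z => ((-(‖z - xs‖ / (2 * α)) : ℝ) : EReal)) :=
        continuous_coe_real_ereal.comp (by fun_prop)
      have := (hc.tendsto xs).mono_left (nhdsWithin_le_nhds (s := {xs}ᶜ))
      simpa using this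
    refine le_of_forall_lt fun c hc => ?_
    obtain ⟨d, hcd, hd0⟩ := exists_between hc
    refine hcd.trans_le (le_liminf_of_le (by isBoundedDefault) ?_)
    filter_upwards [htend.eventually (lt_mem_nhds hd0), self_mem_nhdsWithin] with z h1 h2
    exact h1.le.trans (hquot z h2)
  exact ⟨key, _, key, ys, hys, by abel⟩
end
end

section
/- Suppose the standing assumptions on f, g, h, Ω, F hold and let (x^k), (y^k), (c_k), (α_k) be generated by PGSA. Then: (i) for every k ∈ ℕ, F(x^{k+1}) + ((1/α_k − L)/(2·g(x^{k+1})))·‖x^{k+1} − x^k‖₂² ≤ F(x^k); (ii) the sequence (c_k) = (F(x^k)) converges to some real c with c ≥ 0; (iii) ((1/α_k − L)/g(x^{k+1}))·‖x^{k+1} − x^k‖₂² → 0 as k → ∞. -/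
open Filter Topology
open scoped RealInnerProductSpace

noncomputable section

theorem pgsa_descent {n : ℕ} (h : EuclideanSpace ℝ (Fin n) → ℝ)
    (h' : EuclideanSpace ℝ (Fin n) → EuclideanSpace ℝ (Fin n)) (L : ℝ) (hL : 0 < L)
    (hh_grad : ∀ z, HasGradientAt h (h' z) z)
    (hh_lip : LipschitzWith (Real.toNNReal L) h') (a d : EuclideanSpace ℝ (Fin n)) :
    h (a + d) ≤ h a + ⟪h' a, d⟫ + L / 2 * ‖d‖ ^ 2 := by
  have hder : ∀ t : ℝ, HasDerivAt
      (fun t : ℝ => h (a + t • d) - t * ⟪h' a, d⟫ - L / 2 * ‖d‖ ^ 2 * t ^ 2)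
      (⟪h' (a + t • d), d⟫ - ⟪h' a, d⟫ - L / 2 * ‖d‖ ^ 2 * (2 * t)) t := by
    intro t
    have h1 : HasDerivAt (fun t : ℝ => a + t • d) d t := by
      simpa using ((hasDerivAt_id t).smul_const d).const_add a
    have h2 := (hh_grad (a + t • d)).hasFDerivAt.comp_hasDerivAt t h1
    have h3 : HasDerivAt (fun t : ℝ => t * ⟪h' a, d⟫) ⟪h' a, d⟫ t := by
      simpa using (hasDerivAt_id t).mul_const ⟪h' a, d⟫
    have h4 : HasDerivAt (fun t : ℝ => L / 2 * ‖d‖ ^ 2 * t ^ 2)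
        (L / 2 * ‖d‖ ^ 2 * (2 * t)) t := by
      simpa using (hasDerivAt_pow 2 t).const_mul (L / 2 * ‖d‖ ^ 2)
    have h5 := (h2.sub h3).sub h4
    have h6 : (InnerProductSpace.toDual ℝ (EuclideanSpace ℝ (Fin n))) (h' (a + t • d)) d
        = ⟪h' (a + t • d), d⟫ := by simp
    rw [h6] at h5
    exact h5
  have hanti : AntitoneOn
      (fun t : ℝ => h (a + t • d) - t * ⟪h' a, d⟫ - L / 2 * ‖d‖ ^ 2 * t ^ 2) (Set.Icc 0 1) := by
    apply antitoneOn_of_deriv_nonpos (convex_Icc 0 1)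
    · exact fun t _ => (hder t).continuousAt.continuousWithinAt
    · exact fun t _ => (hder t).differentiableAt.differentiableWithinAt
    · intro t ht
      rw [interior_Icc] at ht
      rw [(hder t).deriv, ← inner_sub_left]
      have e1 := real_inner_le_norm (h' (a + t • d) - h' a) d
      have e2 := hh_lip.dist_le_mul (a + t • d) a
      rw [dist_eq_norm, dist_eq_norm, Real.coe_toNNReal L hL.le, add_sub_cancel_left,
        norm_smul, Real.norm_of_nonneg ht.1.le] at e2
      have e3 := mul_le_mul_of_nonneg_right e2 (norm_nonneg d)
      nlinarith
  have := hanti (Set.left_mem_Icc.2 zero_le_one) (Set.right_mem_Icc.2 zero_le_one) zero_le_one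
  simp at this
  linarith

/-- Theorem 4.3: monotonicity and convergence of the objective values along PGSA. -/
theorem pgsa_objective_value_convergence
    {n : ℕ} (hn : 1 ≤ n)
    (f : EuclideanSpace ℝ (Fin n) → EReal) (g h : EuclideanSpace ℝ (Fin n) → ℝ)
    (h' : EuclideanSpace ℝ (Fin n) → EuclideanSpace ℝ (Fin n)) (L : ℝ)
    (hf_ne_bot : ∀ z, f z ≠ ⊥) (hf_proper : ∃ z, f z ≠ ⊤)
    (hf_lsc : LowerSemicontinuous f)
    (hf_bdd : ∃ m : ℝ, ∀ z, (m : EReal) ≤ f z)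
    (hf_cont : ContinuousOn f {z | f z ≠ ⊤})
    (hg_cvx : ConvexOn ℝ Set.univ g)
    (hL : 0 < L)
    (hh_grad : ∀ z, HasGradientAt h (h' z) z)
    (hh_lip : LipschitzWith (Real.toNNReal L) h')
    (hΩ : ∃ z, g z ≠ 0)
    (hfh : ∀ z, 0 ≤ f z + ((h z : ℝ) : EReal))
    (hg_pos : ∀ z, f z ≠ ⊤ → g z ≠ 0 → 0 < g z)
    (x y : ℕ → EuclideanSpace ℝ (Fin n)) (c α : ℕ → ℝ) (αlo αhi : ℝ)
    (hx0 : g (x 0) ≠ 0 ∧ f (x 0) ≠ ⊤)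
    (hαlo : 0 < αlo) (hαhi : αhi < 1 / L) (hα : ∀ k, αlo ≤ α k ∧ α k ≤ αhi)
    (hy : ∀ k, y (k + 1) ∈ csub g (x k))
    (hc : ∀ k, c k = ((f (x k)).toReal + h (x k)) / g (x k))
    (hiter : ∀ k, x (k + 1) ∈ proxSet (fun z => ((α k : ℝ) : EReal) * f z)
      (x k - α k • h' (x k) + (α k * c k) • y (k + 1)))
    : (∀ k, Ffrac f g h (x (k + 1)) +
          (((1 / α k - L) / (2 * g (x (k + 1))) * ‖x (k + 1) - x k‖ ^ 2 : ℝ) : EReal) ≤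
        Ffrac f g h (x k)) ∧
      (∃ cl : ℝ, 0 ≤ cl ∧ Tendsto c atTop (𝓝 cl) ∧
        Tendsto (fun k => Ffrac f g h (x k)) atTop (𝓝 ((cl : ℝ) : EReal))) ∧
      Tendsto (fun k => (1 / α k - L) / g (x (k + 1)) * ‖x (k + 1) - x k‖ ^ 2)
        atTop (𝓝 0) := by
  have hαp : ∀ k, 0 < α k := fun k => hαlo.trans_le (hα k).1
  have hαL : ∀ k, 0 < 1 / α k - L := by
    intro k
    have h1 : α k < 1 / L := (hα k).2.trans_lt hαhi
    have h2 := one_div_lt_one_div_of_lt (hαp k) h1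
    rw [one_div_one_div] at h2
    linarith
  have hnn : ∀ z, f z ≠ ⊤ → 0 ≤ (f z).toReal + h z := by
    intro z hz
    have h1 := hfh z
    rw [← EReal.coe_toReal hz (hf_ne_bot z)] at h1
    exact_mod_cast h1
  have step : ∀ k, (g (x k) ≠ 0 ∧ f (x k) ≠ ⊤) → (g (x (k+1)) ≠ 0 ∧ f (x (k+1)) ≠ ⊤) ∧
      (f (x (k+1))).toReal + h (x (k+1)) + (1 / α k - L) / 2 * ‖x (k+1) - x k‖ ^ 2
        ≤ c k * g (x (k+1)) := by
    rintro k ⟨hgk, hfk⟩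
    have hgp := hg_pos _ hfk hgk
    have hck : 0 ≤ c k := by
      rw [hc k]; exact div_nonneg (hnn _ hfk) hgp.le
    have hcg : c k * g (x k) = (f (x k)).toReal + h (x k) := by
      rw [hc k]; field_simp
    have hit := hiter k (x k)
    have hft : f (x (k+1)) ≠ ⊤ := by
      intro htop
      simp only [htop] at hit
      rw [EReal.coe_mul_top_of_pos (hαp k), EReal.top_add_coe,
        ← EReal.coe_toReal hfk (hf_ne_bot _), ← EReal.coe_mul, ← EReal.coe_add] at hit
      exact absurd hit (not_le.2 (EReal.coe_lt_top _))
    simp only at hit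
    rw [← EReal.coe_toReal hfk (hf_ne_bot _), ← EReal.coe_toReal hft (hf_ne_bot _),
      ← EReal.coe_mul, ← EReal.coe_add, ← EReal.coe_mul, ← EReal.coe_add,
      EReal.coe_le_coe_iff] at hit
    obtain ⟨d, hd⟩ : ∃ d, d = x (k+1) - x k := ⟨_, rfl⟩
    have hxd : x (k+1) = x k + d := by rw [hd]; abel
    have hdesc := pgsa_descent h h' L hL hh_grad hh_lip (x k) d
    have hsub := hy k (x (k+1))
    rw [← hd] at hsub
    rw [← hxd] at hdesc
    obtain ⟨w, hw⟩ : ∃ w, w = h' (x k) - c k • y (k+1) := ⟨_, rfl⟩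
    have e1 : x (k+1) - (x k - α k • h' (x k) + (α k * c k) • y (k + 1)) = d + α k • w := by
      rw [hw, hxd, smul_sub, smul_smul]; abel
    have e2 : x k - (x k - α k • h' (x k) + (α k * c k) • y (k + 1)) = α k • w := by
      rw [hw, smul_sub, smul_smul]; abel
    rw [e1, e2, norm_add_sq_real, inner_smul_right] at hit
    have e3 : ⟪d, w⟫ = ⟪h' (x k), d⟫ - c k * ⟪y (k+1), d⟫ := by
      rw [hw, inner_sub_right, inner_smul_right, real_inner_comm, real_inner_comm d (y (k+1))]
    have hit2 : (f (x (k+1))).toReal + 1 / α k / 2 * ‖d‖ ^ 2 + ⟪d, w⟫ ≤ (f (x k)).toReal := by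
      have h0 := hαp k
      have : α k * ((f (x (k+1))).toReal + 1 / α k / 2 * ‖d‖ ^ 2 + ⟪d, w⟫)
          ≤ α k * (f (x k)).toReal := by
        have : α k * ((f (x (k+1))).toReal + 1 / α k / 2 * ‖d‖ ^ 2 + ⟪d, w⟫)
          = α k * (f (x (k+1))).toReal + ‖d‖ ^ 2 / 2 + α k * ⟪d, w⟫ := by field_simp
        rw [this]; linarith
      exact le_of_mul_le_mul_left this h0
    have hsub2 := mul_le_mul_of_nonneg_left hsub hck
    have key : (f (x (k+1))).toReal + h (x (k+1)) + (1 / α k - L) / 2 * ‖d‖ ^ 2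
        ≤ c k * g (x (k+1)) := by
      rw [e3] at hit2
      nlinarith
    refine ⟨⟨?_, hft⟩, by rw [← hd]; exact key⟩
    intro hg0
    rw [hg0, mul_zero] at key
    have h1 := hnn _ hft
    have h2 := hαL k
    have h3 : ‖d‖ ^ 2 ≤ 0 := by
      by_contra hcon
      have := mul_pos (half_pos h2) (not_le.1 hcon)
      linarith
    have h4 : d = 0 := by
      have := pow_eq_zero_iff (two_ne_zero) |>.1 (le_antisymm h3 (sq_nonneg ‖d‖))
      exact norm_eq_zero.1 this
    rw [h4, add_zero] at hxd
    rw [hxd] at hg0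
    exact hgk hg0
  have hdom : ∀ k, g (x k) ≠ 0 ∧ f (x k) ≠ ⊤ := by
    intro k
    induction k with
    | zero => exact hx0
    | succ k ih => exact (step k ih).1
  have hF : ∀ k, Ffrac f g h (x k) = ((c k : ℝ) : EReal) := by
    intro k
    rw [Ffrac, if_pos (hdom k), hc k]
  have hgp : ∀ k, 0 < g (x k) := fun k => hg_pos _ (hdom k).2 (hdom k).1
  have hcn : ∀ k, 0 ≤ c k := by
    intro k
    rw [hc k]; exact div_nonneg (hnn _ (hdom k).2) (hgp k).le
  have hmain : ∀ k, c (k+1) + (1 / α k - L) / (2 * g (x (k + 1))) * ‖x (k + 1) - x k‖ ^ 2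
      ≤ c k := by
    intro k
    have h1 := (step k (hdom k)).2
    have h2 := hgp (k+1)
    rw [← div_le_iff₀ h2] at h1
    refine le_of_eq_of_le ?_ h1
    rw [hc (k+1)]
    generalize 1 / α k - L = b
    field_simp
  have hterm : ∀ k, 0 ≤ (1 / α k - L) / g (x (k + 1)) * ‖x (k + 1) - x k‖ ^ 2 := fun k =>
    mul_nonneg (div_nonneg (hαL k).le (hgp _).le) (sq_nonneg _)
  have hhalf : ∀ k, (1 / α k - L) / (2 * g (x (k + 1))) * ‖x (k + 1) - x k‖ ^ 2 =
      ((1 / α k - L) / g (x (k + 1)) * ‖x (k + 1) - x k‖ ^ 2) / 2 := by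
    intro k
    have h2 := hgp (k+1)
    generalize 1 / α k - L = b
    field_simp
  have hanti : Antitone c := by
    apply antitone_nat_of_succ_le
    intro k
    have h1 := hmain k
    rw [hhalf] at h1
    have := hterm k
    linarith
  have hlim : Tendsto c atTop (𝓝 (⨅ k, c k)) :=
    tendsto_atTop_ciInf hanti ⟨0, by rintro _ ⟨k, rfl⟩; exact hcn k⟩
  refine ⟨?_, ⟨⨅ k, c k, Real.iInf_nonneg hcn, hlim, ?_⟩, ?_⟩
  · intro k
    rw [hF, hF, ← EReal.coe_add, EReal.coe_le_coe_iff]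
    exact hmain k
  · simp only [hF]
    exact (continuous_coe_real_ereal.tendsto _).comp hlim
  · have hz : Tendsto (fun k => 2 * (c k - c (k+1))) atTop (𝓝 0) := by
      simpa using (hlim.sub (hlim.comp (tendsto_add_atTop_nat 1))).const_mul 2
    refine squeeze_zero hterm (fun k => ?_) hz
    have h1 := hmain k
    rw [hhalf] at h1
    linarith
end
end

section
/- Suppose the standing assumptions on f, g, h, Ω, F hold together with Assumption 1. Then F is lower semicontinuous on ℝⁿ. -/
open Filter Topology
open scoped RealInnerProductSpace

noncomputable section

/-- Proposition 4.4: under Assumption 1, F is lower semicontinuous. -/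
theorem Ffrac_lowerSemicontinuous
    {n : ℕ} (hn : 1 ≤ n)
    (f : EuclideanSpace ℝ (Fin n) → EReal) (g h : EuclideanSpace ℝ (Fin n) → ℝ)
    (h' : EuclideanSpace ℝ (Fin n) → EuclideanSpace ℝ (Fin n)) (L : ℝ)
    (hf_ne_bot : ∀ z, f z ≠ ⊥) (hf_proper : ∃ z, f z ≠ ⊤)
    (hf_lsc : LowerSemicontinuous f)
    (hf_bdd : ∃ m : ℝ, ∀ z, (m : EReal) ≤ f z)
    (hf_cont : ContinuousOn f {z | f z ≠ ⊤})
    (hg_cvx : ConvexOn ℝ Set.univ g)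
    (hL : 0 < L)
    (hh_grad : ∀ z, HasGradientAt h (h' z) z)
    (hh_lip : LipschitzWith (Real.toNNReal L) h')
    (hΩ : ∃ z, g z ≠ 0)
    (hfh : ∀ z, 0 ≤ f z + ((h z : ℝ) : EReal))
    (hg_pos : ∀ z, f z ≠ ⊤ → g z ≠ 0 → 0 < g z)
    (hA1 : ∀ z, g z = 0 → f z + ((h z : ℝ) : EReal) ≠ 0) :
    LowerSemicontinuous (Ffrac f g h) := by
  have hgc : Continuous g := continuousOn_univ.1 (hg_cvx.continuousOn isOpen_univ)
  have hhc : Continuous h :=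
    continuous_iff_continuousAt.2 fun z => (hh_grad z).hasFDerivAt.continuousAt
  intro x y hy
  obtain ⟨t, hyt, htF⟩ := EReal.lt_iff_exists_real_btwn.1 hy
  have key : ((t * g x - h x : ℝ) : EReal) < f x := by
    by_cases hfx : f x = ⊤
    · rw [hfx]; exact EReal.coe_lt_top _
    have hr : ((f x).toReal : EReal) = f x := EReal.coe_toReal hfx (hf_ne_bot x)
    by_cases hgx : g x = 0
    · have h1 := hfh x
      have h2 := hA1 x hgx
      rw [← hr] at h1 h2 ⊢
      have h3 : (0 : ℝ) ≤ (f x).toReal + h x := by exact_mod_cast h1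
      have h4 : (f x).toReal + h x ≠ 0 := by exact_mod_cast h2
      have h5 := lt_of_le_of_ne h3 (Ne.symm h4)
      rw [EReal.coe_lt_coe_iff, hgx]
      linarith
    · have hg := hg_pos x hfx hgx
      simp only [Ffrac] at htF
      rw [if_pos ⟨hgx, hfx⟩, EReal.coe_lt_coe_iff, lt_div_iff₀ hg] at htF
      rw [← hr, EReal.coe_lt_coe_iff]
      linarith
  obtain ⟨s, hs1, hs2⟩ := EReal.lt_iff_exists_real_btwn.1 key
  have hs1' : t * g x - h x < s := EReal.coe_lt_coe_iff.1 hs1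
  have hcont : Continuous fun z => t * g z - h z := (continuous_const.mul hgc).sub hhc
  have e1 : ∀ᶠ z in 𝓝 x, t * g z - h z < s := hcont.continuousAt.eventually_lt_const hs1'
  filter_upwards [e1, hf_lsc x _ hs2] with z hz1 hz2
  by_cases hz : g z ≠ 0 ∧ f z ≠ ⊤
  · have hg := hg_pos z hz.2 hz.1
    refine hyt.trans ?_
    simp only [Ffrac]
    rw [if_pos hz, EReal.coe_lt_coe_iff, lt_div_iff₀ hg]
    rw [← EReal.coe_toReal hz.2 (hf_ne_bot z), gt_iff_lt, EReal.coe_lt_coe_iff] at hz2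
    linarith
  · simp only [Ffrac]
    rw [if_neg hz]
    exact hyt.trans (EReal.coe_lt_top _)
end
end

section
/- Suppose the standing assumptions on f, g, h, Ω, F hold together with Assumption 1, and let (x^k), (y^k), (c_k), (α_k) be generated by PGSA. If x⋆ ∈ ℝⁿ is an accumulation point of (x^k) (i.e., some subsequence of (x^k) converges to x⋆), then x⋆ ∈ dom(F) and there exists y⋆ ∈ ∂g(x⋆) such that F(x⋆)·y⋆ − ∇h(x⋆) ∈ ∂̂f(x⋆); that is, x⋆ is a critical point of F. -/
open Filter Topology
open scoped RealInnerProductSpace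

noncomputable section

theorem aux_descent {n : ℕ} (h : EuclideanSpace ℝ (Fin n) → ℝ)
    (h' : EuclideanSpace ℝ (Fin n) → EuclideanSpace ℝ (Fin n)) (L : ℝ) (hL : 0 < L)
    (hh_grad : ∀ z, HasGradientAt h (h' z) z)
    (hh_lip : LipschitzWith (Real.toNNReal L) h') (x d : EuclideanSpace ℝ (Fin n)) :
    h (x + d) ≤ h x + ⟪h' x, d⟫ + L / 2 * ‖d‖ ^ 2 := by
  have hd : ∀ t : ℝ, HasDerivAt (fun t : ℝ => h (x + t • d) - t * ⟪h' x, d⟫ - L / 2 * t ^ 2 * ‖d‖ ^ 2)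
      (⟪h' (x + t • d), d⟫ - ⟪h' x, d⟫ - L * t * ‖d‖ ^ 2) t := by
    intro t
    have h1 : HasDerivAt (fun t : ℝ => x + t • d) d t := by
      simpa using ((hasDerivAt_id t).smul_const d).const_add x
    have h2 := (hh_grad (x + t • d)).hasFDerivAt.comp_hasDerivAt t h1
    have h3 : HasDerivAt (fun t : ℝ => t * ⟪h' x, d⟫) ⟪h' x, d⟫ t := by
      simpa using (hasDerivAt_id t).mul_const (⟪h' x, d⟫ : ℝ)
    have h4 : HasDerivAt (fun t : ℝ => L / 2 * t ^ 2 * ‖d‖ ^ 2) (L * t * ‖d‖ ^ 2) t := by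
      have := (((hasDerivAt_id t).pow 2).const_mul (L / 2)).mul_const (‖d‖ ^ 2)
      refine this.congr_deriv ?_
      simp only [id]
      push_cast
      ring
    have := (h2.sub h3).sub h4
    refine this.congr_deriv ?_
    simp
  have hanti := antitoneOn_of_hasDerivWithinAt_nonpos (convex_Icc (0 : ℝ) 1)
    (fun t _ => (hd t).continuousAt.continuousWithinAt)
    (fun t _ => (hd t).hasDerivWithinAt) (by
      intro t ht
      rw [interior_Icc] at ht
      rw [← inner_sub_left]
      have h1 := real_inner_le_norm (h' (x + t • d) - h' x) d
      have h2 := hh_lip.dist_le_mul (x + t • d) x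
      rw [dist_eq_norm, dist_eq_norm, Real.coe_toNNReal _ hL.le, add_sub_cancel_left, norm_smul,
        Real.norm_of_nonneg ht.1.le] at h2
      nlinarith [mul_le_mul_of_nonneg_right h2 (norm_nonneg d)])
  have := hanti (Set.left_mem_Icc.2 zero_le_one) (Set.right_mem_Icc.2 zero_le_one) zero_le_one
  simp at this
  linarith

theorem aux_fsub {n : ℕ} (f : EuclideanSpace ℝ (Fin n) → EReal) (hf_ne_bot : ∀ z, f z ≠ ⊥)
    (x v : EuclideanSpace ℝ (Fin n)) (K : ℝ) (hx : f x ≠ ⊤)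
    (H : ∀ z, f z ≠ ⊤ → (f x).toReal + ⟪v, z - x⟫ - K * ‖z - x‖ ^ 2 ≤ (f z).toReal) :
    v ∈ fsub f x := by
  refine ⟨hx, le_of_forall_lt fun a ha => ?_⟩
  obtain ⟨b, hab, hb⟩ := exists_between ha
  refine hab.trans_le (le_liminf_of_le (by isBoundedDefault) ?_)
  have ht : Tendsto (fun z => ((-K * ‖z - x‖ : ℝ) : EReal)) (𝓝[≠] x) (𝓝 ((0 : ℝ) : EReal)) := by
    have hc : Continuous (fun z => ((-K * ‖z - x‖ : ℝ) : EReal)) :=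
      continuous_coe_real_ereal.comp (by fun_prop)
    have := (hc.tendsto x).mono_left (nhdsWithin_le_nhds (s := {x}ᶜ))
    simpa using this
  have hev := ht.eventually (lt_mem_nhds hb)
  filter_upwards [hev, self_mem_nhdsWithin] with z hz hzx
  refine hz.le.trans ?_
  have hpos : 0 < ‖z - x‖ := norm_pos_iff.2 (sub_ne_zero.2 hzx)
  rw [EReal.le_div_iff_mul_le (by exact_mod_cast hpos) (EReal.coe_ne_top _), ← EReal.coe_mul]
  by_cases hz' : f z = ⊤
  · rw [hz']
    rw [← EReal.coe_toReal hx (hf_ne_bot x)]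
    simp
  · have := H z hz'
    rw [← EReal.coe_toReal hx (hf_ne_bot x), ← EReal.coe_toReal hz' (hf_ne_bot z),
      ← EReal.coe_sub, ← EReal.coe_sub, EReal.coe_le_coe_iff]
    nlinarith

theorem aux_prox {n : ℕ} (f : EuclideanSpace ℝ (Fin n) → EReal) (hf_ne_bot : ∀ z, f z ≠ ⊥)
    (a : ℝ) (ha : 0 < a) (x p w : EuclideanSpace ℝ (Fin n))
    (hp : p ∈ proxSet (fun z => (a : EReal) * f z) (x - a • w)) (z : EuclideanSpace ℝ (Fin n))
    (hz : f z ≠ ⊤) : f p ≠ ⊤ ∧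
    (f p).toReal - 1 / (2 * a) * ‖z - p‖ ^ 2 - 1 / a * ⟪z - p, p - x⟫ - ⟪w, z - p⟫
      ≤ (f z).toReal := by
  have h := hp z
  simp only at h
  rw [← EReal.coe_toReal hz (hf_ne_bot z)] at h
  have hpt : f p ≠ ⊤ := by
    intro hpt
    rw [hpt, EReal.coe_mul_top_of_pos ha, EReal.top_add_coe, ← EReal.coe_mul, ← EReal.coe_add] at h
    exact EReal.coe_ne_top _ (top_le_iff.1 h)
  refine ⟨hpt, ?_⟩
  rw [← EReal.coe_toReal hpt (hf_ne_bot p)] at h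
  rw [← EReal.coe_mul, ← EReal.coe_mul, ← EReal.coe_add, ← EReal.coe_add, EReal.coe_le_coe_iff] at h
  have e1 : z - (x - a • w) = (z - p) + ((p - x) + a • w) := by abel
  have e2 : p - (x - a • w) = (p - x) + a • w := by abel
  rw [e1, e2, norm_add_sq_real (z - p), inner_add_right, inner_smul_right,
    real_inner_comm w (z - p)] at h
  rw [← mul_le_mul_iff_of_pos_left ha]
  have : a * ((f p).toReal - 1 / (2 * a) * ‖z - p‖ ^ 2 - 1 / a * ⟪z - p, p - x⟫ - ⟪w, z - p⟫)
    = a * (f p).toReal - 1 / 2 * ‖z - p‖ ^ 2 - ⟪z - p, p - x⟫ - a * ⟪w, z - p⟫ := by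
    field_simp
  rw [this]
  linarith [real_inner_comm w (z - p)]

theorem aux_bdd {n : ℕ} (g : EuclideanSpace ℝ (Fin n) → ℝ) (hg : Continuous g)
    (u v : ℕ → EuclideanSpace ℝ (Fin n)) (xs : EuclideanSpace ℝ (Fin n))
    (hu : Tendsto u atTop (𝓝 xs)) (hv : ∀ k, v k ∈ csub g (u k)) :
    ∃ ys ∈ csub g xs, ∃ φ : ℕ → ℕ, StrictMono φ ∧ Tendsto (v ∘ φ) atTop (𝓝 ys) := by
  obtain ⟨M, hM⟩ := (isCompact_closedBall xs 2).exists_bound_of_continuousOn hg.continuousOn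
  have hb : ∀ᶠ k in atTop, v k ∈ Metric.closedBall (0 : EuclideanSpace ℝ (Fin n)) (2 * M) := by
    filter_upwards [hu.eventually (Metric.closedBall_mem_nhds xs one_pos)] with k hk
    rw [dist_eq_norm] at hk
    rw [mem_closedBall_zero_iff]
    have h1 := hM (u k) (by rw [Metric.mem_closedBall, dist_eq_norm]; linarith)
    rw [Real.norm_eq_abs, abs_le] at h1
    by_cases hv0 : v k = 0
    · rw [hv0, norm_zero]; linarith
    have hn : ‖v k‖ ≠ 0 := norm_ne_zero_iff.2 hv0
    have h2 := hM (u k + (‖v k‖⁻¹) • v k) (by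
      rw [Metric.mem_closedBall, dist_eq_norm, add_sub_right_comm]
      refine (norm_add_le _ _).trans ?_
      rw [norm_smul, norm_inv, norm_norm, inv_mul_cancel₀ hn]; linarith)
    rw [Real.norm_eq_abs, abs_le] at h2
    have h3 := hv k (u k + (‖v k‖⁻¹) • v k)
    rw [add_sub_cancel_left, inner_smul_right, real_inner_self_eq_norm_sq, pow_two,
      inv_mul_cancel_left₀ hn] at h3
    linarith
  obtain ⟨ys, -, φ, hφ, hlim⟩ := tendsto_subseq_of_frequently_bounded
    Metric.isBounded_closedBall hb.frequently
  refine ⟨ys, fun z => ?_, φ, hφ, hlim⟩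
  have hu' := hu.comp hφ.tendsto_atTop
  exact le_of_tendsto' (((hg.tendsto xs).comp hu').add (hlim.inner (hu'.const_sub z)))
    (fun j => hv (φ j) z)

/-- Theorem 4.5: any accumulation point of the PGSA sequence is a critical point of F. -/
theorem pgsa_accumulation_point_is_critical
    {n : ℕ} (hn : 1 ≤ n)
    (f : EuclideanSpace ℝ (Fin n) → EReal) (g h : EuclideanSpace ℝ (Fin n) → ℝ)
    (h' : EuclideanSpace ℝ (Fin n) → EuclideanSpace ℝ (Fin n)) (L : ℝ)
    (hf_ne_bot : ∀ z, f z ≠ ⊥) (hf_proper : ∃ z, f z ≠ ⊤)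
    (hf_lsc : LowerSemicontinuous f)
    (hf_bdd : ∃ m : ℝ, ∀ z, (m : EReal) ≤ f z)
    (hf_cont : ContinuousOn f {z | f z ≠ ⊤})
    (hg_cvx : ConvexOn ℝ Set.univ g)
    (hL : 0 < L)
    (hh_grad : ∀ z, HasGradientAt h (h' z) z)
    (hh_lip : LipschitzWith (Real.toNNReal L) h')
    (hΩ : ∃ z, g z ≠ 0)
    (hfh : ∀ z, 0 ≤ f z + ((h z : ℝ) : EReal))
    (hg_pos : ∀ z, f z ≠ ⊤ → g z ≠ 0 → 0 < g z)
    (hA1 : ∀ z, g z = 0 → f z + ((h z : ℝ) : EReal) ≠ 0)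
    (x y : ℕ → EuclideanSpace ℝ (Fin n)) (c α : ℕ → ℝ) (αlo αhi : ℝ)
    (hx0 : g (x 0) ≠ 0 ∧ f (x 0) ≠ ⊤)
    (hαlo : 0 < αlo) (hαhi : αhi < 1 / L) (hα : ∀ k, αlo ≤ α k ∧ α k ≤ αhi)
    (hy : ∀ k, y (k + 1) ∈ csub g (x k))
    (hc : ∀ k, c k = ((f (x k)).toReal + h (x k)) / g (x k))
    (hiter : ∀ k, x (k + 1) ∈ proxSet (fun z => ((α k : ℝ) : EReal) * f z)
      (x k - α k • h' (x k) + (α k * c k) • y (k + 1)))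
    (xs : EuclideanSpace ℝ (Fin n))
    (hacc : ∃ φ : ℕ → ℕ, StrictMono φ ∧ Tendsto (fun j => x (φ j)) atTop (𝓝 xs)) :
    (g xs ≠ 0 ∧ f xs ≠ ⊤) ∧
      ∃ ys ∈ csub g xs, ((Ffrac f g h xs).toReal) • ys - h' xs ∈ fsub f xs := by
  have hgc : Continuous g := hg_cvx.locallyLipschitz.continuous
  have hhc : Continuous h := continuous_iff_continuousAt.2 fun z => (hh_grad z).continuousAt
  have hh'c : Continuous h' := hh_lip.continuous
  have hαpos : ∀ k, 0 < α k := fun k => hαlo.trans_le (hα k).1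
  have hαhi0 : 0 < αhi := (hαpos 0).trans_le (hα 0).2
  have hfh' : ∀ z, f z ≠ ⊤ → 0 ≤ (f z).toReal + h z := by
    intro z hz
    have := hfh z
    rw [← EReal.coe_toReal hz (hf_ne_bot z), ← EReal.coe_add] at this
    exact_mod_cast this
  have hA1' : ∀ z, f z ≠ ⊤ → (f z).toReal + h z ≤ 0 → g z ≠ 0 := by
    intro z hz hle hgz
    apply hA1 z hgz
    have := le_antisymm hle (hfh' z hz)
    rw [← EReal.coe_toReal hz (hf_ne_bot z), ← EReal.coe_add, this, EReal.coe_zero]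
  have hprox : ∀ k z, f z ≠ ⊤ → f (x (k + 1)) ≠ ⊤ ∧
      (f (x (k + 1))).toReal - 1 / (2 * α k) * ‖z - x (k + 1)‖ ^ 2
        - 1 / α k * ⟪z - x (k + 1), x (k + 1) - x k⟫ - ⟪h' (x k) - c k • y (k + 1), z - x (k + 1)⟫
        ≤ (f z).toReal := by
    intro k z hz
    refine aux_prox f hf_ne_bot (α k) (hαpos k) (x k) _ _ ?_ z hz
    have := hiter k
    convert this using 2
    rw [smul_sub, smul_smul]; abel
  obtain ⟨δ, hδ, hδk⟩ : ∃ δ > 0, ∀ k, δ ≤ 1 / (2 * α k) - L / 2 := by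
    refine ⟨(1 / αhi - L) / 2, ?_, fun k => ?_⟩
    · have : L < 1 / αhi := by rw [lt_div_iff₀ hαhi0, mul_comm, ← lt_div_iff₀ hL]; exact hαhi
      linarith
    · have h1 : 1 / αhi ≤ 1 / α k := one_div_le_one_div_of_le (hαpos k) (hα k).2
      have : 1 / (2 * α k) = 1 / α k / 2 := by field_simp
      linarith
  have hcg : ∀ k, g (x k) ≠ 0 → c k * g (x k) = (f (x k)).toReal + h (x k) := by
    intro k hk
    rw [hc k, div_mul_cancel₀ _ hk]
  -- one step
  have hstep : ∀ k, (g (x k) ≠ 0 ∧ f (x k) ≠ ⊤) → f (x (k + 1)) ≠ ⊤ ∧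
      (f (x (k + 1))).toReal + h (x (k + 1)) + δ * ‖x (k + 1) - x k‖ ^ 2 ≤ c k * g (x (k + 1)) := by
    intro k hk
    obtain ⟨h1, h2⟩ := hprox k (x k) hk.2
    refine ⟨h1, ?_⟩
    have h3 := aux_descent h h' L hL hh_grad hh_lip (x k) (x (k + 1) - x k)
    rw [add_sub_cancel] at h3
    have h4 := hy k (x (k + 1))
    have h5 := hcg k hk.1
    have hck : 0 ≤ c k := by
      rw [hc k]; exact div_nonneg (hfh' _ hk.2) (hg_pos _ hk.2 hk.1).le
    have h6 := mul_le_mul_of_nonneg_left h4 hck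
    rw [← neg_sub (x (k + 1)) (x k), norm_neg, inner_neg_left, inner_neg_right,
      real_inner_self_eq_norm_sq, inner_sub_left, inner_smul_left] at h2
    have h7 := mul_le_mul_of_nonneg_right (hδk k) (sq_nonneg ‖x (k + 1) - x k‖)
    have h8 : 1 / α k = 2 * (1 / (2 * α k)) := by field_simp
    rw [h8] at h2
    simp only [conj_trivial] at h2
    nlinarith
  have hdom : ∀ k, g (x k) ≠ 0 ∧ f (x k) ≠ ⊤ := by
    intro k
    induction k with
    | zero => exact hx0
    | succ k ih =>
      obtain ⟨h1, h2⟩ := hstep k ih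
      refine ⟨fun h0 => ?_, h1⟩
      rw [h0, mul_zero] at h2
      exact hA1' _ h1 (by nlinarith [sq_nonneg ‖x (k + 1) - x k‖]) h0
  have hgp : ∀ k, 0 < g (x k) := fun k => hg_pos _ (hdom k).2 (hdom k).1
  have hc0 : ∀ k, 0 ≤ c k := by
    intro k
    rw [hc k]; exact div_nonneg (hfh' _ (hdom k).2) (hgp k).le
  have hdec : ∀ k, δ * ‖x (k + 1) - x k‖ ^ 2 ≤ (c k - c (k + 1)) * g (x (k + 1)) := by
    intro k
    have := (hstep k (hdom k)).2
    rw [← hcg (k + 1) (hdom _).1] at this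
    linarith
  have hanti : Antitone c := by
    refine antitone_nat_of_succ_le fun k => ?_
    have h1 : 0 ≤ (c k - c (k + 1)) * g (x (k + 1)) :=
      le_trans (by positivity) (hdec k)
    have := nonneg_of_mul_nonneg_left h1 (hgp (k + 1))
    linarith
  obtain ⟨cs, hcs⟩ : ∃ cs, Tendsto c atTop (𝓝 cs) :=
    ⟨_, tendsto_atTop_ciInf hanti ⟨0, by rintro _ ⟨k, rfl⟩; exact hc0 k⟩⟩
  obtain ⟨φ, hφ, hφx⟩ := hacc
  -- shifted subsequence
  obtain ⟨ψ, hψ, hψx⟩ : ∃ ψ : ℕ → ℕ, Tendsto ψ atTop atTop ∧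
      Tendsto (fun j => x (ψ j + 1)) atTop (𝓝 xs) := by
    have hφ1 : ∀ j, 1 ≤ φ (j + 1) := fun j => by have := hφ.id_le (j + 1); simp at this; omega
    refine ⟨fun j => φ (j + 1) - 1, ?_, ?_⟩
    · refine tendsto_atTop_mono (fun j => ?_) tendsto_id
      have := hφ.id_le (j + 1); simp at this ⊢; omega
    · have := hφx.comp (tendsto_add_atTop_nat 1)
      refine this.congr fun j => ?_
      simp only [Function.comp]
      rw [Nat.sub_add_cancel (hφ1 j)]
  have hψ1 : Tendsto (fun j => ψ j + 1) atTop atTop := (tendsto_add_atTop_nat 1).comp hψ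
  have hg1 : Tendsto (fun j => g (x (ψ j + 1))) atTop (𝓝 (g xs)) := (hgc.tendsto xs).comp hψx
  have hh1 : Tendsto (fun j => h (x (ψ j + 1))) atTop (𝓝 (h xs)) := (hhc.tendsto xs).comp hψx
  have hcψ := hcs.comp hψ
  have hcψ1 := hcs.comp hψ1
  have hd : Tendsto (fun j => x (ψ j + 1) - x (ψ j)) atTop (𝓝 0) := by
    have h1 : Tendsto (fun j => (c (ψ j) - c (ψ j + 1)) * g (x (ψ j + 1)) / δ) atTop (𝓝 0) := by
      have := ((hcψ.sub hcψ1).mul hg1).div_const δ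
      simpa using this
    have h2 : Tendsto (fun j => ‖x (ψ j + 1) - x (ψ j)‖ ^ 2) atTop (𝓝 0) :=
      squeeze_zero (fun j => sq_nonneg _) (fun j => by
        rw [le_div_iff₀ hδ, mul_comm]; exact hdec (ψ j)) h1
    have h3 := h2.sqrt
    simp only [Real.sqrt_zero, Real.sqrt_sq (norm_nonneg _)] at h3
    exact tendsto_zero_iff_norm_tendsto_zero.2 h3
  have hψ0 : Tendsto (fun j => x (ψ j)) atTop (𝓝 xs) := by
    have := hψx.sub hd
    simpa using this
  have hfr : Tendsto (fun j => (f (x (ψ j + 1))).toReal) atTop (𝓝 (cs * g xs - h xs)) := by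
    refine ((hcψ1.mul hg1).sub hh1).congr fun j => ?_
    have := hcg (ψ j + 1) (hdom _).1
    simp only [Function.comp]
    linarith
  have hfE : Tendsto (fun j => f (x (ψ j + 1))) atTop (𝓝 ((cs * g xs - h xs : ℝ) : EReal)) := by
    refine ((continuous_coe_real_ereal.tendsto _).comp hfr).congr fun j => ?_
    simp only [Function.comp]
    exact EReal.coe_toReal (hdom _).2 (hf_ne_bot _)
  have hfle : f xs ≤ ((cs * g xs - h xs : ℝ) : EReal) := by
    refine le_of_forall_lt fun b hb => ?_
    obtain ⟨b', hbb', hb'⟩ := exists_between hb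
    exact hbb'.trans_le (ge_of_tendsto hfE
      ((hψx.eventually (hf_lsc xs b' hb')).mono fun _ hj => hj.le))
  have hfs : f xs ≠ ⊤ := fun ht => EReal.coe_ne_top _ (top_le_iff.1 (ht ▸ hfle))
  have hfeq : (f xs).toReal = cs * g xs - h xs := by
    have h1 : Tendsto (fun j => f (x (ψ j + 1))) atTop (𝓝 (f xs)) :=
      (hf_cont xs hfs).tendsto.comp
        (tendsto_nhdsWithin_iff.2 ⟨hψx, Eventually.of_forall fun j => (hdom _).2⟩)
    rw [tendsto_nhds_unique h1 hfE, EReal.toReal_coe]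
  have hgs : g xs ≠ 0 := fun h0 => hA1' xs hfs (by rw [hfeq, h0]; simp) h0
  refine ⟨⟨hgs, hfs⟩, ?_⟩
  have hF : (Ffrac f g h xs).toReal = cs := by
    unfold Ffrac
    rw [if_pos ⟨hgs, hfs⟩, EReal.toReal_coe, hfeq]
    field_simp
    ring
  obtain ⟨ys, hys, θ, hθ, hθy⟩ := aux_bdd g hgc (fun j => x (ψ j)) (fun j => y (ψ j + 1)) xs hψ0
    (fun j => hy (ψ j))
  refine ⟨ys, hys, ?_⟩
  rw [hF]
  refine aux_fsub f hf_ne_bot xs _ (1 / (2 * αlo)) hfs fun z hz => ?_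
  have hθt := hθ.tendsto_atTop
  have k1 := (hfr.comp hθt)
  have k2 := (tendsto_const_nhds (x := z)).sub (hψx.comp hθt)
  have k3 := hd.comp hθt
  have k4 := ((hh'c.tendsto xs).comp (hψ0.comp hθt)).sub ((hcψ.comp hθt).smul hθy)
  have k5 := ((k1.sub ((k2.norm.pow 2).const_mul (1 / (2 * αlo)))).sub
    ((k2.norm.mul k3.norm).const_mul (1 / αlo))).sub (k4.inner (𝕜 := ℝ) k2)
  have k6 := le_of_tendsto' (b := (f z).toReal) k5 (fun j => by
    simp only [Function.comp]
    refine le_trans ?_ (hprox (ψ (θ j)) z hz).2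
    have m1 : 1 / α (ψ (θ j)) ≤ 1 / αlo := one_div_le_one_div_of_le hαlo (hα _).1
    have m2 : 1 / (2 * α (ψ (θ j))) ≤ 1 / (2 * αlo) :=
      one_div_le_one_div_of_le (by linarith) (by linarith [(hα (ψ (θ j))).1])
    have m3 := real_inner_le_norm (z - x (ψ (θ j) + 1)) (x (ψ (θ j) + 1) - x (ψ (θ j)))
    have m4 := mul_le_mul_of_nonneg_left m3 (one_div_pos.2 (hαpos (ψ (θ j)))).le
    have m5 := mul_le_mul_of_nonneg_right m1 (mul_nonneg (norm_nonneg (z - x (ψ (θ j) + 1)))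
      (norm_nonneg (x (ψ (θ j) + 1) - x (ψ (θ j)))))
    have m6 := mul_le_mul_of_nonneg_right m2 (sq_nonneg ‖z - x (ψ (θ j) + 1)‖)
    linarith)
  rw [norm_zero, mul_zero, mul_zero, sub_zero, ← hfeq] at k6
  rw [← neg_sub (h' xs), inner_neg_left]
  linarith
end
end

section
/- Suppose the standing assumptions on f, g, h, Ω, F hold together with Assumptions 1, 2, 3 and 4, and suppose F satisfies the Kurdyka–Łojasiewicz property at every point of dom(F). Let (x^k), (y^k), (c_k), (α_k) be generated by PGSA. Then ∑_{k=1}^{∞} ‖x^k − x^{k−1}‖₂ < +∞ and (x^k) converges to a point x⋆ ∈ dom(F) which is a critical point of F, i.e., F(x⋆)·∇g(x⋆) − ∇h(x⋆) ∈ ∂̂f(x⋆). -/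
open Filter Topology
open scoped RealInnerProductSpace

noncomputable section

/-- The Kurdyka–Łojasiewicz property of  at . -/
def KLProperty {n : ℕ} (Φ : EuclideanSpace ℝ (Fin n) → EReal)
    (xh : EuclideanSpace ℝ (Fin n)) : Prop :=
  ∃ η : ℝ, 0 < η ∧ ∃ O ∈ 𝓝 xh, ∃ φ φ' : ℝ → ℝ,
    φ 0 = 0 ∧ (∀ s ∈ Set.Ico (0 : ℝ) η, 0 ≤ φ s) ∧
    ContinuousOn φ (Set.Ico 0 η) ∧ ConcaveOn ℝ (Set.Ico 0 η) φ ∧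
    (∀ s ∈ Set.Ioo (0 : ℝ) η, HasDerivAt φ (φ' s) s ∧ 0 < φ' s) ∧
    ∀ x ∈ O, Φ xh < Φ x → Φ x < Φ xh + ((η : ℝ) : EReal) →
      1 ≤ ENNReal.ofReal (φ' ((Φ x).toReal - (Φ xh).toReal)) *
        EMetric.infEdist 0 (lsub Φ x)


lemma fsub_of_eventually {n : ℕ} (Φ : EuclideanSpace ℝ (Fin n) → EReal)
    (hbot : ∀ z, Φ z ≠ ⊥) (x v : EuclideanSpace ℝ (Fin n)) (hx : Φ x ≠ ⊤)
    (H : ∀ ε > (0:ℝ), ∀ᶠ z in 𝓝 x, Φ z ≠ ⊤ →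
      (Φ x).toReal + ⟪v, z - x⟫ - ε * ‖z - x‖ ≤ (Φ z).toReal) : v ∈ fsub Φ x := by
  refine ⟨hx, ?_⟩
  refine le_of_forall_lt fun b hb => ?_
  obtain ⟨r, hbr, hr0⟩ := EReal.lt_iff_exists_real_btwn.1 hb
  refine lt_of_lt_of_le hbr ?_
  have hr : r < 0 := by exact_mod_cast hr0
  refine le_liminf_of_le (by isBoundedDefault) ?_
  have H1 := (H (-r) (by linarith)).filter_mono (nhdsWithin_le_nhds (s := {x}ᶜ))
  filter_upwards [H1, self_mem_nhdsWithin] with z hz hzx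
  have hpos : 0 < ‖z - x‖ := norm_pos_iff.2 (sub_ne_zero.2 hzx)
  rw [← EReal.coe_toReal hx (hbot x)]
  by_cases hzt : Φ z = ⊤
  · rw [hzt, EReal.top_sub_coe, EReal.top_sub_coe, EReal.top_div_of_pos_ne_top]
    · exact le_top
    · exact_mod_cast hpos
    · exact EReal.coe_ne_top _
  · have := hz hzt
    rw [← EReal.coe_toReal hzt (hbot z)]
    rw [← EReal.coe_sub, ← EReal.coe_sub, ← EReal.coe_div, EReal.coe_le_coe_iff, le_div_iff₀ hpos]
    linarith

lemma descent {n : ℕ} (h : EuclideanSpace ℝ (Fin n) → ℝ)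
    (h' : EuclideanSpace ℝ (Fin n) → EuclideanSpace ℝ (Fin n)) (L : ℝ) (hL : 0 < L)
    (hh_grad : ∀ z, HasGradientAt h (h' z) z)
    (hh_lip : LipschitzWith (Real.toNNReal L) h') (x z : EuclideanSpace ℝ (Fin n)) :
    h z ≤ h x + ⟪h' x, z - x⟫ + L / 2 * ‖z - x‖ ^ 2 := by
  set d := z - x with hd
  let q : ℝ → ℝ := fun t => h (x + t • d) - t * ⟪h' x, d⟫ - L / 2 * t ^ 2 * ‖d‖ ^ 2
  have hq : ∀ t, HasDerivAt q (⟪h' (x + t • d), d⟫ - ⟪h' x, d⟫ - L * t * ‖d‖ ^ 2) t := by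
    intro t
    have h1 : HasDerivAt (fun t : ℝ => x + t • d) d t := by
      simpa using ((hasDerivAt_id t).smul_const d).const_add x
    have h2 := (hh_grad (x + t • d)).hasFDerivAt.comp_hasDerivAt t h1
    have h3 : HasDerivAt (fun t : ℝ => t * ⟪h' x, d⟫) ⟪h' x, d⟫ t := by
      simpa using (hasDerivAt_id t).mul_const ⟪h' x, d⟫
    have h4 : HasDerivAt (fun t : ℝ => L / 2 * t ^ 2 * ‖d‖ ^ 2) (L * t * ‖d‖ ^ 2) t := by
      have := ((hasDerivAt_pow 2 t).const_mul (L / 2)).mul_const (‖d‖ ^ 2)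
      refine this.congr_deriv ?_
      push_cast; ring
    have := (h2.sub h3).sub h4
    refine HasDerivAt.congr_deriv (f := q) this ?_
    simp
  have hanti : AntitoneOn q (Set.Icc 0 1) := by
    refine antitoneOn_of_deriv_nonpos (convex_Icc 0 1)
      (fun t _ => (hq t).continuousAt.continuousWithinAt)
      (fun t _ => (hq t).differentiableAt.differentiableWithinAt) ?_
    intro t ht
    rw [interior_Icc] at ht
    rw [(hq t).deriv, ← inner_sub_left]
    have h1 := real_inner_le_norm (h' (x + t • d) - h' x) d
    have h2 := hh_lip.dist_le_mul (x + t • d) x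
    rw [dist_eq_norm, dist_eq_norm, Real.coe_toNNReal _ hL.le, add_sub_cancel_left, norm_smul,
      Real.norm_of_nonneg ht.1.le] at h2
    have h3 := mul_le_mul_of_nonneg_right h2 (norm_nonneg d)
    nlinarith
  have := hanti (Set.left_mem_Icc.2 zero_le_one) (Set.right_mem_Icc.2 zero_le_one) zero_le_one
  simp [q, hd] at this
  simp only [hd]
  linarith

lemma csub_eq {n : ℕ} (g : EuclideanSpace ℝ (Fin n) → ℝ) (x y y' : EuclideanSpace ℝ (Fin n))
    (hy : y ∈ csub g x) (hg : HasGradientAt g y' x) : y = y' := by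
  have h1 : HasFDerivAt (fun z => g z - innerSL ℝ y z)
      (InnerProductSpace.toDual ℝ _ y' - innerSL ℝ y) x :=
    hg.hasFDerivAt.sub (innerSL ℝ y).hasFDerivAt
  have hmin : IsLocalMin (fun z => g z - innerSL ℝ y z) x := by
    refine Eventually.of_forall fun z => ?_
    have := hy z
    rw [inner_sub_right] at this
    simp only [innerSL_apply_apply]
    linarith
  have h2 := hmin.hasFDerivAt_eq_zero h1
  refine ext_inner_right ℝ fun w => ?_
  have := congrArg (fun l => l w) h2
  simp at this
  linarith

lemma prox_real {n : ℕ} (f : EuclideanSpace ℝ (Fin n) → EReal) (hbot : ∀ z, f z ≠ ⊥)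
    (a : ℝ) (ha : 0 < a) (x xp p : EuclideanSpace ℝ (Fin n)) (hx : f x ≠ ⊤)
    (H : xp ∈ proxSet (fun z => (a : EReal) * f z) (x - a • p)) :
    f xp ≠ ⊤ ∧ ∀ z, f z ≠ ⊤ →
      (f xp).toReal + 1 / (2 * a) * ‖xp - x‖ ^ 2 + ⟪p, xp - x⟫ ≤
      (f z).toReal + 1 / (2 * a) * ‖z - x‖ ^ 2 + ⟪p, z - x⟫ := by
  have key : f xp ≠ ⊤ := by
    intro htop
    have := H x
    simp only [htop] at this
    rw [← EReal.coe_toReal hx (hbot x), EReal.mul_top_of_pos (by exact_mod_cast ha),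
      EReal.top_add_coe, top_le_iff] at this
    rw [← EReal.coe_mul, ← EReal.coe_add] at this
    exact EReal.coe_ne_top _ this
  refine ⟨key, fun z hz => ?_⟩
  have := H z
  simp only at this
  rw [← EReal.coe_toReal hz (hbot z), ← EReal.coe_toReal key (hbot xp)] at this
  norm_cast at this
  have e : ∀ w, ‖w - (x - a • p)‖ ^ 2 = ‖w - x‖ ^ 2 + 2 * a * ⟪p, w - x⟫ + ‖a • p‖ ^ 2 := by
    intro w
    rw [show w - (x - a • p) = (w - x) + a • p by abel, norm_add_sq_real, inner_smul_right,
      real_inner_comm]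
    ring
  rw [e, e] at this
  have h2 : ∀ F N I : ℝ, F + 1 / (2 * a) * N + I = (a * F + (N + 2 * a * I) / 2) / a := by
    intro F N I
    field_simp
    ring
  rw [h2, h2]
  exact div_le_div_of_nonneg_right (by linarith) ha.le

lemma kl_summable {E : Type*} [NormedAddCommGroup E] (x : ℕ → E) (xh : E) (ρ C : ℝ) (hρ : 0 < ρ)
    (hC : 0 ≤ C) (ψ : ℕ → ℝ) (N0 : ℕ) (hψ : ∀ k ≥ N0, 0 ≤ ψ k) (hψ0 : Tendsto ψ atTop (𝓝 0))
    (hd : Tendsto (fun k => ‖x (k + 1) - x k‖) atTop (𝓝 0))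
    (hcl : ∃ᶠ k in atTop, ‖x k - xh‖ < ρ / 4)
    (H : ∀ k ≥ N0, ‖x k - xh‖ < ρ → ‖x (k + 1) - xh‖ < ρ →
      2 * ‖x (k + 2) - x (k + 1)‖ ≤ ‖x (k + 1) - x k‖ + C * (ψ (k + 1) - ψ (k + 2))) :
    Summable (fun k => ‖x (k + 1) - x k‖) := by
  have h1 : ∀ᶠ k in atTop, ‖x (k + 1) - x k‖ < ρ / 4 := hd.eventually_lt_const (by linarith)
  have h2 : ∀ᶠ k in atTop, C * ψ (k + 1) < ρ / 4 := by
    have : Tendsto (fun k => C * ψ (k + 1)) atTop (𝓝 (C * 0)) :=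
      (hψ0.comp (tendsto_add_atTop_nat 1)).const_mul C
    refine this.eventually_lt_const ?_
    simp; linarith
  obtain ⟨N, hN1, hN2, hN3, hN4⟩ := (hcl.and_eventually (h1.and (h2.and (eventually_ge_atTop N0)))).exists
  have hψN : 0 ≤ C * ψ (N + 1) := mul_nonneg hC (hψ _ (by omega))
  have hdist : ∀ m, ‖x (N + m) - x N‖ ≤ ∑ j ∈ Finset.range m, ‖x (N + j + 1) - x (N + j)‖ := by
    intro m
    induction m with
    | zero => simp
    | succ m ih =>
      rw [Finset.sum_range_succ]
      calc ‖x (N + (m + 1)) - x N‖ = ‖(x (N + m) - x N) + (x (N + m + 1) - x (N + m))‖ := by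
            congr 1; rw [← add_assoc]; abel
        _ ≤ _ := (norm_add_le _ _).trans (by linarith)
  have hball : ∀ m, ∑ j ∈ Finset.range m, ‖x (N + j + 1) - x (N + j)‖ < 3 * ρ / 4 →
      ‖x (N + m) - xh‖ < ρ := by
    intro m hm
    calc ‖x (N + m) - xh‖ = ‖(x (N + m) - x N) + (x N - xh)‖ := by congr 1; abel
      _ ≤ ‖x (N + m) - x N‖ + ‖x N - xh‖ := norm_add_le _ _
      _ < ρ := by linarith [hdist m]
  have P : ∀ m, ∑ j ∈ Finset.range (m + 1), ‖x (N + j + 1) - x (N + j)‖ +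
      ‖x (N + m + 1) - x (N + m)‖ + C * ψ (N + m + 1) ≤ 2 * ‖x (N + 1) - x N‖ + C * ψ (N + 1) := by
    intro m
    induction m with
    | zero => simp; linarith
    | succ m ih =>
      have hψm : 0 ≤ C * ψ (N + m + 1) := mul_nonneg hC (hψ _ (by omega))
      have b1 : ‖x (N + (m + 1)) - xh‖ < ρ := by
        apply hball
        linarith [norm_nonneg (x (N + m + 1) - x (N + m))]
      have b0 : ‖x (N + m) - xh‖ < ρ := by
        apply hball
        rw [Finset.sum_range_succ] at ih
        linarith [norm_nonneg (x (N + m + 1) - x (N + m))]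
      have := H (N + m) (by omega) b0 b1
      rw [Finset.sum_range_succ]
      have e : N + (m + 1) + 1 = N + m + 2 := by omega
      have e' : N + (m + 1) = N + m + 1 := by omega
      rw [e, e']
      linarith
  have hs : Summable (fun k => ‖x (N + k + 1) - x (N + k)‖) := by
    refine summable_of_sum_range_le (c := 2 * ‖x (N + 1) - x N‖ + C * ψ (N + 1))
      (fun _ => norm_nonneg _) fun m => ?_
    have := P m
    rw [Finset.sum_range_succ] at this
    have hψm : 0 ≤ C * ψ (N + m + 1) := mul_nonneg hC (hψ _ (by omega))
    linarith [norm_nonneg (x (N + m + 1) - x (N + m))]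
  rw [← summable_nat_add_iff N]
  refine hs.congr fun k => ?_
  rw [add_comm N k]

lemma grad_eps {n : ℕ} (h : EuclideanSpace ℝ (Fin n) → ℝ) (x y : EuclideanSpace ℝ (Fin n))
    (hg : HasGradientAt h y x) (ε : ℝ) (hε : 0 < ε) :
    ∀ᶠ z in 𝓝 x, |h z - h x - ⟪y, z - x⟫| ≤ ε * ‖z - x‖ := by
  have := (hasGradientAt_iff_isLittleO.1 hg).bound hε
  simpa using this

lemma fsub_frac {n : ℕ} (f : EuclideanSpace ℝ (Fin n) → EReal) (g h : EuclideanSpace ℝ (Fin n) → ℝ)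
    (x w hx gx : EuclideanSpace ℝ (Fin n)) (hfx : f x ≠ ⊤) (hgx : 0 < g x)
    (A : ℝ) (hf : ∀ z, f z ≠ ⊤ → (f x).toReal + ⟪w, z - x⟫ - A * ‖z - x‖ ^ 2 ≤ (f z).toReal)
    (hh : HasGradientAt h hx x) (hg : HasGradientAt g gx x) :
    (1 / g x) • (w + hx - (((f x).toReal + h x) / g x) • gx) ∈ fsub (Ffrac f g h) x := by
  set c := ((f x).toReal + h x) / g x with hc
  set v := w + hx - c • gx with hv
  have hFx : Ffrac f g h x = (c : EReal) := by simp [Ffrac, hgx.ne', hfx, hc]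
  refine fsub_of_eventually _ ?_ _ _ ?_ ?_
  · intro z
    unfold Ffrac
    split_ifs
    · exact EReal.coe_ne_bot _
    · simp
  · rw [hFx]; exact EReal.coe_ne_top _
  intro ε hε
  have hcont : ContinuousAt g x := hg.hasFDerivAt.continuousAt
  set e1 := ε * g x / 4 with he1
  have he1p : 0 < e1 := by positivity
  have hcont2 : Tendsto (fun z => ‖v‖ * |g z - g x|) (𝓝 x) (𝓝 (‖v‖ * |g x - g x|)) :=
    (((hcont.sub tendsto_const_nhds)).abs).const_mul _
  have E0 : ∀ᶠ z in 𝓝 x, ‖v‖ * |g z - g x| < e1 * g x := by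
    refine hcont2.eventually_lt_const ?_
    simp; positivity
  have E1 : ∀ᶠ z in 𝓝 x, g x / 2 < g z := hcont.eventually_const_lt (by linarith)
  have E2 := grad_eps h x hx hh (e1 / 4) (by positivity)
  have E3 := grad_eps g x gx hg (e1 / (4 * (|c| + 1))) (by positivity)
  have E4 : ∀ᶠ z in 𝓝 x, |A| * ‖z - x‖ < e1 / 4 := by
    have : Tendsto (fun z => |A| * ‖z - x‖) (𝓝 x) (𝓝 (|A| * ‖x - x‖)) := by
      apply Continuous.tendsto (f := fun z => |A| * ‖z - x‖); fun_prop
    refine this.eventually_lt_const ?_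
    simp; positivity
  filter_upwards [E0, E1, E2, E3, E4] with z z0 z1 z2 z3 z4 hz
  have hgz : 0 < g z := by linarith
  have hfz : f z ≠ ⊤ := by
    intro hh
    exact hz (by simp [Ffrac, hh])
  have hFz : Ffrac f g h z = ((((f z).toReal + h z) / g z : ℝ) : EReal) := by
    simp [Ffrac, hgz.ne', hfz]
  rw [hFx, hFz, EReal.toReal_coe, EReal.toReal_coe, le_div_iff₀ hgz]
  set r := ‖z - x‖ with hr
  have hr0 : 0 ≤ r := norm_nonneg _
  have hfz' := hf z hfz
  have i1 : ⟪v, z - x⟫ = ⟪w, z - x⟫ + ⟪hx, z - x⟫ - c * ⟪gx, z - x⟫ := by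
    rw [hv, inner_sub_left, inner_add_left, inner_smul_left]; simp
  have i2 : ⟪(1 / g x) • v, z - x⟫ = ⟪v, z - x⟫ / g x := by
    rw [inner_smul_left]; simp; ring
  have hA : A * r ^ 2 ≤ e1 / 4 * r := by
    have : A * r ^ 2 ≤ (|A| * r) * r := by
      nlinarith [mul_le_mul_of_nonneg_right (le_abs_self A) (sq_nonneg r)]
    exact this.trans (mul_le_mul_of_nonneg_right z4.le hr0)
  have hgc : c * (g z - g x - ⟪gx, z - x⟫) ≤ e1 / 4 * r := by
    calc c * (g z - g x - ⟪gx, z - x⟫) ≤ |c * (g z - g x - ⟪gx, z - x⟫)| := le_abs_self _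
      _ = |c| * |g z - g x - ⟪gx, z - x⟫| := abs_mul _ _
      _ ≤ (|c| + 1) * (e1 / (4 * (|c| + 1)) * r) := by gcongr; linarith
      _ = e1 / 4 * r := by field_simp
  have hhc := (abs_le.1 z2).1
  have hcg : c * g x = (f x).toReal + h x := by rw [hc]; field_simp
  have hN : ⟪v, z - x⟫ - e1 * r ≤ (f z).toReal + h z - c * g z := by
    rw [i1]; nlinarith
  have hI : ⟪v, z - x⟫ / g x * (g z - g x) ≤ e1 * r := by
    calc ⟪v, z - x⟫ / g x * (g z - g x) ≤ |⟪v, z - x⟫ / g x * (g z - g x)| := le_abs_self _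
      _ = |⟪v, z - x⟫| * |g z - g x| / g x := by
        rw [abs_mul, abs_div, abs_of_pos hgx]; ring
      _ ≤ (‖v‖ * r) * |g z - g x| / g x := by
        gcongr; exact abs_real_inner_le_norm _ _
      _ = (‖v‖ * |g z - g x|) * r / g x := by ring
      _ ≤ (e1 * g x) * r / g x := by gcongr
      _ = e1 * r := by field_simp
  rw [i2]
  have hq : ⟪v, z - x⟫ / g x * g x = ⟪v, z - x⟫ := by field_simp
  have hl : 2 * e1 * r ≤ ε * r * g z := by
    rw [he1]; nlinarith [mul_le_mul_of_nonneg_left z1.le (mul_nonneg hε.le hr0)]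
  nlinarith

lemma grad_lip {n : ℕ} (h : EuclideanSpace ℝ (Fin n) → ℝ)
    (h' : EuclideanSpace ℝ (Fin n) → EuclideanSpace ℝ (Fin n)) (L : ℝ) (hL : 0 < L)
    (hh_grad : ∀ z, HasGradientAt h (h' z) z)
    (hh_lip : LipschitzWith (Real.toNNReal L) h') (x : EuclideanSpace ℝ (Fin n)) (u v)
    (hu : ‖u - x‖ < 1) (hv : ‖v - x‖ < 1) : |h u - h v| ≤ (‖h' x‖ + 2 * L) * ‖u - v‖ := by
  have key : ∀ u v, ‖u - x‖ < 1 → ‖v - x‖ < 1 → h u - h v ≤ (‖h' x‖ + 2 * L) * ‖u - v‖ := by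
    intro u v hu hv
    have h1 := descent h h' L hL hh_grad hh_lip v u
    have h2 := real_inner_le_norm (h' v) (u - v)
    have h3 : ‖h' v‖ ≤ ‖h' x‖ + L := by
      have := hh_lip.dist_le_mul v x
      rw [dist_eq_norm, dist_eq_norm, Real.coe_toNNReal _ hL.le] at this
      have h4 := norm_le_norm_add_norm_sub' (h' v) (h' x)
      nlinarith
    have h5 : ‖u - v‖ ≤ 2 := by
      rw [show u - v = (u - x) - (v - x) by abel]
      exact (norm_sub_le _ _).trans (by linarith)
    have h6 := norm_nonneg (u - v)
    nlinarith [mul_le_mul_of_nonneg_right h3 h6, mul_le_mul_of_nonneg_right h5 h6]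
  rw [abs_le]
  have h1 := key u v hu hv
  have h2 := key v u hv hu
  rw [norm_sub_rev] at h2
  constructor <;> linarith

lemma rel_err {n : ℕ}
    (f : EuclideanSpace ℝ (Fin n) → EReal) (g h : EuclideanSpace ℝ (Fin n) → ℝ)
    (h' : EuclideanSpace ℝ (Fin n) → EuclideanSpace ℝ (Fin n)) (L : ℝ)
    (hg_cvx : ConvexOn ℝ Set.univ g)
    (hL : 0 < L)
    (hh_grad : ∀ z, HasGradientAt h (h' z) z)
    (hh_lip : LipschitzWith (Real.toNNReal L) h')
    (hA3 : ∀ z, f z ≠ ⊤ → ∃ K : ℝ, ∃ δ > (0 : ℝ), ∀ u, ‖u - z‖ < δ → f u ≠ ⊤ →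
      ∀ v, ‖v - z‖ < δ → f v ≠ ⊤ → |(f u).toReal - (f v).toReal| ≤ K * ‖u - v‖)
    (g' : EuclideanSpace ℝ (Fin n) → EuclideanSpace ℝ (Fin n))
    (hA4_lip : ∀ z, g z ≠ 0 → ∃ K : NNReal, ∃ δ > (0 : ℝ),
      LipschitzOnWith K g' (Metric.ball z δ ∩ {w | g w ≠ 0}))
    (xh : EuclideanSpace ℝ (Fin n)) (hfx : f xh ≠ ⊤) (hgx : 0 < g xh) (C0 αlo : ℝ)
    (hαlo : 0 < αlo) (hC0 : 0 ≤ C0) :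
    ∃ ρ > (0 : ℝ), ∃ B > (0 : ℝ), ∀ u v, ‖u - xh‖ < ρ → ‖v - xh‖ < ρ → f u ≠ ⊤ → f v ≠ ⊤ →
      ∀ cu cv a : ℝ, cu = ((f u).toReal + h u) / g u → cv = ((f v).toReal + h v) / g v →
      0 ≤ cu → cu ≤ C0 → αlo ≤ a →
      ‖(1 / g v) • (cu • g' u - h' u - (1 / a) • (v - u) + h' v - cv • g' v)‖ ≤ B * ‖v - u‖ := by
  obtain ⟨Kf, δf, hδf, Hf⟩ := hA3 xh hfx
  obtain ⟨Kg', δg, hδg, Hg'⟩ := hA4_lip xh hgx.ne'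
  obtain ⟨Kg, t, ht, Hg⟩ := hg_cvx.locallyLipschitz xh
  obtain ⟨δt, hδt, Ht⟩ := Metric.mem_nhds_iff.1 ht
  have hcont : Continuous g := hg_cvx.locallyLipschitz.continuous
  obtain ⟨δ0, hδ0, H0⟩ := Metric.eventually_nhds_iff.1
    (hcont.continuousAt.eventually_const_lt (show g xh / 2 < g xh by linarith))
  set m := g xh / 2 with hm
  have hmp : 0 < m := by linarith
  set KN := |Kf| + (‖h' xh‖ + 2 * L) with hKN
  have hKNp : 0 < KN := by positivity
  set Kc := (KN + C0 * Kg) / m with hKc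
  have hKcp : 0 < Kc := by positivity
  set M := ‖g' xh‖ + Kg' with hM
  have hMp : 0 ≤ M := by positivity
  set B := 1 / m * (C0 * Kg' + Kc * M + L + 1 / αlo) with hB
  refine ⟨min (min δf δg) (min (min δt δ0) 1), by positivity, B, by positivity, ?_⟩
  intro u v hu hv hfu hfv cu cv a hcu hcv hcu0 hcu1 ha
  simp only [lt_min_iff] at hu hv
  obtain ⟨⟨u1, u2⟩, ⟨u3, u4⟩, u5⟩ := hu
  obtain ⟨⟨v1, v2⟩, ⟨v3, v4⟩, v5⟩ := hv
  have gu : m < g u := H0 (by rwa [dist_eq_norm])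
  have gv : m < g v := H0 (by rwa [dist_eq_norm])
  have gup : 0 < g u := by linarith
  have gvp : 0 < g v := by linarith
  have ap : 0 < a := by linarith
  set r := ‖v - u‖ with hr
  have hr0 : 0 ≤ r := norm_nonneg _
  have f1 : |(f v).toReal - (f u).toReal| ≤ |Kf| * r :=
    (Hf v v1 hfv u u1 hfu).trans (mul_le_mul_of_nonneg_right (le_abs_self _) hr0)
  have h1 := grad_lip h h' L hL hh_grad hh_lip xh v u v5 u5
  have g1 : |g v - g u| ≤ Kg * r := by
    have := Hg.dist_le_mul v (Ht (by rwa [Metric.mem_ball, dist_eq_norm])) u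
      (Ht (by rwa [Metric.mem_ball, dist_eq_norm]))
    rwa [Real.dist_eq, dist_eq_norm] at this
  have mu : u ∈ Metric.ball xh δg ∩ {w | g w ≠ 0} :=
    ⟨by rwa [Metric.mem_ball, dist_eq_norm], gup.ne'⟩
  have mv : v ∈ Metric.ball xh δg ∩ {w | g w ≠ 0} :=
    ⟨by rwa [Metric.mem_ball, dist_eq_norm], gvp.ne'⟩
  have mx : xh ∈ Metric.ball xh δg ∩ {w | g w ≠ 0} := ⟨Metric.mem_ball_self hδg, hgx.ne'⟩
  have g2 : ‖g' u - g' v‖ ≤ Kg' * r := by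
    have := Hg'.dist_le_mul u mu v mv
    rwa [dist_eq_norm, dist_eq_norm, norm_sub_rev u v] at this
  have g3 : ‖g' v‖ ≤ M := by
    have := Hg'.dist_le_mul v mv xh mx
    rw [dist_eq_norm, dist_eq_norm] at this
    have h4 := norm_le_norm_add_norm_sub' (g' v) (g' xh)
    have : (Kg' : ℝ) * ‖v - xh‖ ≤ Kg' * 1 := by gcongr
    linarith
  have h2 : ‖h' v - h' u‖ ≤ L * r := by
    have := hh_lip.dist_le_mul v u
    rwa [dist_eq_norm, dist_eq_norm, Real.coe_toNNReal _ hL.le] at this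
  have c1 : |cu - cv| ≤ Kc * r := by
    have e : cu - cv = (cu * (g v - g u) - (((f v).toReal - (f u).toReal) + (h v - h u))) / g v := by
      have e1 : cu * g u = (f u).toReal + h u := by rw [hcu]; field_simp
      have e2 : cv * g v = (f v).toReal + h v := by rw [hcv]; field_simp
      rw [eq_div_iff gvp.ne']
      linarith
    rw [e, abs_div, abs_of_pos gvp]
    have num : |cu * (g v - g u) - (((f v).toReal - (f u).toReal) + (h v - h u))| ≤
        (KN + C0 * Kg) * r := by
      calc _ ≤ |cu * (g v - g u)| + |((f v).toReal - (f u).toReal) + (h v - h u)| := abs_sub _ _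
        _ ≤ cu * |g v - g u| + (|(f v).toReal - (f u).toReal| + |h v - h u|) := by
          rw [abs_mul, abs_of_nonneg hcu0]
          gcongr
          exact abs_add_le _ _
        _ ≤ C0 * (Kg * r) + (|Kf| * r + (‖h' xh‖ + 2 * L) * r) := by gcongr
        _ = _ := by rw [hKN]; ring
    calc _ ≤ ((KN + C0 * Kg) * r) / m := by gcongr
      _ = Kc * r := by rw [hKc]; ring
  rw [norm_smul, Real.norm_of_nonneg (by positivity)]
  have main : ‖cu • g' u - h' u - (1 / a) • (v - u) + h' v - cv • g' v‖ ≤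
      (C0 * Kg' + Kc * M + L + 1 / αlo) * r := by
    have e : cu • g' u - h' u - (1 / a) • (v - u) + h' v - cv • g' v =
      cu • (g' u - g' v) + (cu - cv) • g' v + (h' v - h' u) + (-(1 / a)) • (v - u) := by
      module
    rw [e]
    refine (norm_add₄_le).trans ?_
    rw [norm_smul, norm_smul, norm_smul, Real.norm_of_nonneg hcu0, Real.norm_eq_abs, norm_neg,
      Real.norm_of_nonneg (by positivity : 0 ≤ 1 / a)]
    calc _ ≤ C0 * (Kg' * r) + (Kc * r) * M + L * r + 1 / αlo * r := by gcongr
      _ = _ := by ring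
  calc _ ≤ 1 / m * ((C0 * Kg' + Kc * M + L + 1 / αlo) * r) := by gcongr
    _ = _ := by rw [hB]; ring

lemma amgm_step (p q T : ℝ) (hp : 0 ≤ p) (hT : 0 ≤ T) (h : q ^ 2 ≤ p * T) : 2 * q ≤ p + T := by
  refine abs_le_of_sq_le_sq' ?_ (by positivity) |>.2
  nlinarith [sq_nonneg (p - T)]

set_option maxHeartbeats 2000000

/-- Theorem 4.9: global convergence of PGSA under the KL property. -/
theorem pgsa_global_convergence
    {n : ℕ} (hn : 1 ≤ n)
    (f : EuclideanSpace ℝ (Fin n) → EReal) (g h : EuclideanSpace ℝ (Fin n) → ℝ)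
    (h' : EuclideanSpace ℝ (Fin n) → EuclideanSpace ℝ (Fin n)) (L : ℝ)
    (hf_ne_bot : ∀ z, f z ≠ ⊥) (hf_proper : ∃ z, f z ≠ ⊤)
    (hf_lsc : LowerSemicontinuous f)
    (hf_bdd : ∃ m : ℝ, ∀ z, (m : EReal) ≤ f z)
    (hf_cont : ContinuousOn f {z | f z ≠ ⊤})
    (hg_cvx : ConvexOn ℝ Set.univ g)
    (hL : 0 < L)
    (hh_grad : ∀ z, HasGradientAt h (h' z) z)
    (hh_lip : LipschitzWith (Real.toNNReal L) h')
    (hΩ : ∃ z, g z ≠ 0)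
    (hfh : ∀ z, 0 ≤ f z + ((h z : ℝ) : EReal))
    (hg_pos : ∀ z, f z ≠ ⊤ → g z ≠ 0 → 0 < g z)
    (hA1 : ∀ z, g z = 0 → f z + ((h z : ℝ) : EReal) ≠ 0)
    (hA2 : ∀ t : ℝ, Bornology.IsBounded {z | Ffrac f g h z ≤ (t : EReal)})
    (hA3 : ∀ z, f z ≠ ⊤ → ∃ K : ℝ, ∃ δ > (0 : ℝ), ∀ u, ‖u - z‖ < δ → f u ≠ ⊤ →
      ∀ v, ‖v - z‖ < δ → f v ≠ ⊤ → |(f u).toReal - (f v).toReal| ≤ K * ‖u - v‖)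
    (g' : EuclideanSpace ℝ (Fin n) → EuclideanSpace ℝ (Fin n))
    (hA4_grad : ∀ z, g z ≠ 0 → HasGradientAt g (g' z) z)
    (hA4_cont : ContinuousOn g' {z | g z ≠ 0})
    (hA4_lip : ∀ z, g z ≠ 0 → ∃ K : NNReal, ∃ δ > (0 : ℝ),
      LipschitzOnWith K g' (Metric.ball z δ ∩ {w | g w ≠ 0}))
    (hKL : ∀ z, g z ≠ 0 ∧ f z ≠ ⊤ → KLProperty (Ffrac f g h) z)
    (x y : ℕ → EuclideanSpace ℝ (Fin n)) (c α : ℕ → ℝ) (αlo αhi : ℝ)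
    (hx0 : g (x 0) ≠ 0 ∧ f (x 0) ≠ ⊤)
    (hαlo : 0 < αlo) (hαhi : αhi < 1 / L) (hα : ∀ k, αlo ≤ α k ∧ α k ≤ αhi)
    (hy : ∀ k, y (k + 1) ∈ csub g (x k))
    (hc : ∀ k, c k = ((f (x k)).toReal + h (x k)) / g (x k))
    (hiter : ∀ k, x (k + 1) ∈ proxSet (fun z => ((α k : ℝ) : EReal) * f z)
      (x k - α k • h' (x k) + (α k * c k) • y (k + 1)))
    : Summable (fun k => ‖x (k + 1) - x k‖) ∧
      ∃ xs : EuclideanSpace ℝ (Fin n), Tendsto x atTop (𝓝 xs) ∧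
        (g xs ≠ 0 ∧ f xs ≠ ⊤) ∧
        ((Ffrac f g h xs).toReal) • g' xs - h' xs ∈ fsub f xs := by
  have hαpos : ∀ k, 0 < α k := fun k => hαlo.trans_le (hα k).1
  have hαhip : 0 < αhi := (hαpos 0).trans_le (hα 0).2
  have hgcont : Continuous g := hg_cvx.locallyLipschitz.continuous
  have hhcont : Continuous h := continuous_iff_continuousAt.2 fun z =>
    (hh_grad z).hasFDerivAt.continuousAt
  have hfh' : ∀ z, f z ≠ ⊤ → 0 ≤ (f z).toReal + h z := by
    intro z hz
    have := hfh z
    rw [← EReal.coe_toReal hz (hf_ne_bot z)] at this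
    exact_mod_cast this
  have hA1' : ∀ z, f z ≠ ⊤ → g z = 0 → (f z).toReal + h z ≠ 0 := by
    intro z hz hgz h0
    refine hA1 z hgz ?_
    rw [← EReal.coe_toReal hz (hf_ne_bot z)]
    exact_mod_cast h0
  -- one step of the prox map
  have hprox : ∀ k, f (x k) ≠ ⊤ → f (x (k + 1)) ≠ ⊤ ∧ ∀ z, f z ≠ ⊤ →
      (f (x (k + 1))).toReal + 1 / (2 * α k) * ‖x (k + 1) - x k‖ ^ 2 +
        ⟪h' (x k) - c k • y (k + 1), x (k + 1) - x k⟫ ≤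
      (f z).toReal + 1 / (2 * α k) * ‖z - x k‖ ^ 2 + ⟪h' (x k) - c k • y (k + 1), z - x k⟫ := by
    intro k hk
    refine prox_real f hf_ne_bot (α k) (hαpos k) (x k) (x (k + 1)) _ hk ?_
    have e : x k - α k • (h' (x k) - c k • y (k + 1)) =
      x k - α k • h' (x k) + (α k * c k) • y (k + 1) := by module
    rw [e]
    exact hiter k
  set a := 1 / (2 * αhi) - L / 2 with ha
  have hap : 0 < a := by
    have : L < 1 / αhi := by
      rw [lt_div_iff₀ hL] at hαhi
      rw [lt_div_iff₀ hαhip]; linarith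
    have e : a = (1 / αhi - L) / 2 := by rw [ha]; field_simp
    rw [e]; linarith
  have hcdef : ∀ k, (g (x k) ≠ 0 ∧ f (x k) ≠ ⊤) →
      0 < g (x k) ∧ 0 ≤ c k ∧ c k * g (x k) = (f (x k)).toReal + h (x k) := by
    intro k hk
    have hgk := hg_pos _ hk.2 hk.1
    refine ⟨hgk, ?_, ?_⟩
    · rw [hc k]; exact div_nonneg (hfh' _ hk.2) hgk.le
    · rw [hc k]; field_simp
  have hstep : ∀ k, (g (x k) ≠ 0 ∧ f (x k) ≠ ⊤) → (g (x (k + 1)) ≠ 0 ∧ f (x (k + 1)) ≠ ⊤) ∧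
      (f (x (k + 1))).toReal + h (x (k + 1)) + a * ‖x (k + 1) - x k‖ ^ 2 ≤
        c k * g (x (k + 1)) := by
    intro k hk
    obtain ⟨hgk, hck, hckg⟩ := hcdef k hk
    obtain ⟨hf1, hf2⟩ := hprox k hk.2
    have h1 := hf2 (x k) hk.2
    simp only [sub_self, norm_zero, inner_zero_right] at h1
    have h2 := descent h h' L hL hh_grad hh_lip (x k) (x (k + 1))
    have h3 := mul_le_mul_of_nonneg_left (hy k (x (k + 1))) hck
    rw [inner_sub_left, inner_smul_left] at h1
    simp only [conj_trivial] at h1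
    have h4 : 1 / (2 * αhi) * ‖x (k + 1) - x k‖ ^ 2 ≤ 1 / (2 * α k) * ‖x (k + 1) - x k‖ ^ 2 := by
      have := hαpos k
      have := (hα k).2
      gcongr
    have key : (f (x (k + 1))).toReal + h (x (k + 1)) + a * ‖x (k + 1) - x k‖ ^ 2 ≤
        c k * g (x (k + 1)) := by
      rw [ha]; nlinarith
    refine ⟨⟨?_, hf1⟩, key⟩
    intro h0
    refine hA1' _ hf1 h0 (le_antisymm ?_ (hfh' _ hf1))
    rw [h0] at key
    nlinarith [mul_nonneg hap.le (sq_nonneg ‖x (k + 1) - x k‖)]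
  have hdom : ∀ k, g (x k) ≠ 0 ∧ f (x k) ≠ ⊤ := by
    intro k
    induction k with
    | zero => exact hx0
    | succ k ih => exact (hstep k ih).1
  have hgp : ∀ k, 0 < g (x k) := fun k => (hcdef k (hdom k)).1
  have hc0 : ∀ k, 0 ≤ c k := fun k => (hcdef k (hdom k)).2.1
  have hcg : ∀ k, c k * g (x k) = (f (x k)).toReal + h (x k) := fun k => (hcdef k (hdom k)).2.2
  have hdec : ∀ k, a * ‖x (k + 1) - x k‖ ^ 2 ≤ (c k - c (k + 1)) * g (x (k + 1)) := by
    intro k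
    have := (hstep k (hdom k)).2
    have := hcg (k + 1)
    linarith
  have hanti : Antitone c := by
    refine antitone_nat_of_succ_le fun k => ?_
    have h1 : 0 ≤ (c k - c (k + 1)) * g (x (k + 1)) := (by positivity : (0:ℝ) ≤ _).trans (hdec k)
    have := nonneg_of_mul_nonneg_left h1 (hgp (k + 1))
    linarith
  have hFx : ∀ k, Ffrac f g h (x k) = (c k : EReal) := by
    intro k
    simp [Ffrac, (hdom k).1, (hdom k).2, hc k]
  obtain ⟨cs, hcs⟩ : ∃ cs, Tendsto c atTop (𝓝 cs) :=
    ⟨_, tendsto_atTop_ciInf hanti ⟨0, by rintro _ ⟨k, rfl⟩; exact hc0 k⟩⟩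
  have hcsle : ∀ k, cs ≤ c k := fun k => hanti.le_of_tendsto hcs k
  have hbd : Bornology.IsBounded (Set.range x) := by
    refine (hA2 (c 0)).subset ?_
    rintro _ ⟨k, rfl⟩
    simp only [Set.mem_ofPred_eq, hFx]
    exact_mod_cast hanti (Nat.zero_le k)
  obtain ⟨M, hMp, hM⟩ : ∃ M > 0, ∀ k, g (x k) ≤ M := by
    obtain ⟨M, hM⟩ := hbd.isCompact_closure.bddAbove_image (f := g) hgcont.continuousOn
    have : ∀ k, g (x k) ≤ M := fun k =>
      hM (Set.mem_image_of_mem g (subset_closure (Set.mem_range_self k)))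
    exact ⟨M, (hgp 0).trans_le (this 0), this⟩
  have hdec2 : ∀ k, ‖x (k + 1) - x k‖ ^ 2 ≤ M / a * (c k - c (k + 1)) := by
    intro k
    have h1 : (c k - c (k + 1)) * g (x (k + 1)) ≤ (c k - c (k + 1)) * M :=
      mul_le_mul_of_nonneg_left (hM _) (sub_nonneg.2 (hanti (Nat.le_succ k)))
    have h2 := (hdec k).trans h1
    rw [div_mul_eq_mul_div, le_div_iff₀ hap]
    linarith
  have hd0 : Tendsto (fun k => ‖x (k + 1) - x k‖) atTop (𝓝 0) := by
    have h1 : Tendsto (fun k => M / a * (c k - c (k + 1))) atTop (𝓝 (M / a * (cs - cs))) :=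
      (hcs.sub (hcs.comp (tendsto_add_atTop_nat 1))).const_mul _
    rw [sub_self, mul_zero] at h1
    have h2 : Tendsto (fun k => ‖x (k + 1) - x k‖ ^ 2) atTop (𝓝 0) :=
      squeeze_zero (fun k => by positivity) hdec2 h1
    have h3 := h2.sqrt
    simpa using h3
  -- cluster point
  obtain ⟨xh, -, θ, hθ, hxθ⟩ := tendsto_subseq_of_bounded hbd (fun k => Set.mem_range_self k)
  have hgθ : Tendsto (fun j => g (x (θ j))) atTop (𝓝 (g xh)) := (hgcont.tendsto xh).comp hxθ
  have hhθ : Tendsto (fun j => h (x (θ j))) atTop (𝓝 (h xh)) := (hhcont.tendsto xh).comp hxθ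
  have hfxh : f xh ≠ ⊤ := by
    intro htop
    have h1 : ∀ᶠ z in 𝓝 xh, ((c 0 * M - h xh + 1 : ℝ) : EReal) < f z :=
      hf_lsc xh _ (by show _ < f xh; rw [htop]; exact EReal.coe_lt_top _)
    have h2 := hxθ.eventually h1
    have h3 : ∀ᶠ j in atTop, h xh - 1 < h (x (θ j)) := hhθ.eventually_const_lt (by linarith)
    obtain ⟨j, j1, j2⟩ := (h2.and h3).exists
    simp only [Function.comp_apply] at j1
    rw [← EReal.coe_toReal (hdom (θ j)).2 (hf_ne_bot _)] at j1
    have j3 : c 0 * M - h xh + 1 < (f (x (θ j))).toReal := by exact_mod_cast j1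
    have j4 := hcg (θ j)
    have j5 : c (θ j) * g (x (θ j)) ≤ c 0 * M :=
      mul_le_mul (hanti (Nat.zero_le _)) (hM _) (hgp _).le (hc0 0)
    linarith
  have hfcont : ∀ u : ℕ → EuclideanSpace ℝ (Fin n), Tendsto u atTop (𝓝 xh) →
      (∀ j, f (u j) ≠ ⊤) → Tendsto (fun j => (f (u j)).toReal) atTop (𝓝 (f xh).toReal) := by
    intro u hu hfu
    refine (EReal.tendsto_toReal hfxh (hf_ne_bot _)).comp ?_
    exact (hf_cont xh hfxh).tendsto.comp
      (tendsto_nhdsWithin_iff.2 ⟨hu, Eventually.of_forall hfu⟩)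
  have hfθ := hfcont _ hxθ (fun j => (hdom (θ j)).2)
  have hlim : cs * g xh = (f xh).toReal + h xh := by
    refine tendsto_nhds_unique ((hcs.comp hθ.tendsto_atTop).mul hgθ) ?_
    refine (hfθ.add hhθ).congr fun j => ?_
    exact (hcg (θ j)).symm
  have hgxh0 : g xh ≠ 0 := by
    intro h0
    refine hA1' xh hfxh h0 ?_
    rw [← hlim, h0, mul_zero]
  have hgxh : 0 < g xh := hg_pos xh hfxh hgxh0
  have hFxh : Ffrac f g h xh = (cs : EReal) := by
    have : cs = ((f xh).toReal + h xh) / g xh := by rw [← hlim]; field_simp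
    simp [Ffrac, hgxh0, hfxh, this]
  have hyg : ∀ k, y (k + 1) = g' (x k) := fun k =>
    csub_eq g _ _ _ (hy k) (hA4_grad _ (hdom k).1)
  -- relative error
  obtain ⟨ρ1, hρ1, B, hB, hrel⟩ := rel_err f g h h' L hg_cvx hL hh_grad hh_lip hA3 g' hA4_lip xh hfxh
    hgxh (c 0) αlo hαlo (hc0 0)
  have hsubg : ∀ k, (1 / g (x (k + 1))) • (c k • g' (x k) - h' (x k) - (1 / α k) • (x (k + 1) - x k)
      + h' (x (k + 1)) - c (k + 1) • g' (x (k + 1))) ∈ lsub (Ffrac f g h) (x (k + 1)) := by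
    intro k
    refine ⟨fun _ => x (k + 1), fun _ => _, tendsto_const_nhds, tendsto_const_nhds, fun _ => ?_,
      tendsto_const_nhds⟩
    rw [hc (k + 1)]
    refine fsub_frac f g h (x (k + 1)) _ _ _ (hdom _).2 (hgp _) (1 / (2 * α k)) ?_ (hh_grad _)
      (hA4_grad _ (hdom _).1)
    intro z hz
    have h1 := (hprox k (hdom k).2).2 z hz
    rw [hyg k] at h1
    set d := x (k + 1) - x k with hd
    set e := z - x (k + 1) with he
    have e1 : z - x k = e + d := by rw [hd, he]; abel
    rw [e1, norm_add_sq_real, inner_add_right] at h1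
    have e2 : ⟪c k • g' (x k) - h' (x k) - (1 / α k) • d, e⟫ =
        -⟪h' (x k) - c k • g' (x k), e⟫ - 1 / α k * ⟪e, d⟫ := by
      rw [show c k • g' (x k) - h' (x k) - (1 / α k) • d =
        -(h' (x k) - c k • g' (x k)) - (1 / α k) • d by abel, inner_sub_left, inner_neg_left,
        inner_smul_left, real_inner_comm d e]
      simp
    rw [e2]
    have e3 : 1 / (2 * α k) * (‖e‖ ^ 2 + 2 * ⟪e, d⟫ + ‖d‖ ^ 2) =
        1 / (2 * α k) * ‖e‖ ^ 2 + 1 / α k * ⟪e, d⟫ + 1 / (2 * α k) * ‖d‖ ^ 2 := by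
      have := (hαpos k).ne'
      field_simp
    rw [e3] at h1
    linarith
  obtain ⟨η, hη, O, hO, φ, φ', hφ0, hφnn, hφc, hφconc, hφd, hkl⟩ := hKL xh ⟨hgxh0, hfxh⟩
  obtain ⟨ρ2, hρ2, hOb⟩ := Metric.mem_nhds_iff.1 hO
  obtain ⟨N0, hN0⟩ := eventually_atTop.1 (hcs.eventually_lt_const (show cs < cs + η by linarith))
  have hmem : ∀ k ≥ N0, c k - cs ∈ Set.Ico 0 η := fun k hk =>
    ⟨by linarith [hcsle k], by linarith [hN0 k hk]⟩
  have hsum : Summable (fun k => ‖x (k + 1) - x k‖) := by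
    refine kl_summable x xh (min ρ1 ρ2) (M / a * B) (by positivity) (by positivity)
      (fun k => φ (c k - cs)) N0 (fun k hk => hφnn _ (hmem k hk)) ?_ hd0 ?_ ?_
    · have h0 : (0:ℝ) ∈ Set.Ico 0 η := ⟨le_rfl, hη⟩
      have h1 := (hφc 0 h0).tendsto
      rw [hφ0] at h1
      refine h1.comp (tendsto_nhdsWithin_iff.2 ⟨?_, ?_⟩)
      · simpa using hcs.sub_const cs
      · exact eventually_atTop.2 ⟨N0, hmem⟩
    · have : ∀ᶠ j in atTop, ‖x (θ j) - xh‖ < min ρ1 ρ2 / 4 := by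
        have := (Metric.tendsto_nhds.1 hxθ) (min ρ1 ρ2 / 4) (by positivity)
        simpa [dist_eq_norm] using this
      exact hθ.tendsto_atTop.frequently this.frequently
    · intro k hk hk0 hk1
      set d1 := ‖x (k + 1) - x k‖ with hd1
      have hd2 := hdec2 (k + 1)
      rw [show k + 1 + 1 = k + 2 by rfl] at hd2
      set d2 := ‖x (k + 2) - x (k + 1)‖ with hd2'
      have hd10 : 0 ≤ d1 := norm_nonneg _
      have hd20 : 0 ≤ d2 := norm_nonneg _
      have hc12 : c (k + 2) ≤ c (k + 1) := hanti (by omega)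
      have hcs2 := hcsle (k + 2)
      rcases (hcsle (k + 1)).eq_or_lt with heq | hlt
      · have h2 : c (k + 2) = c (k + 1) := le_antisymm hc12 (by linarith)
        rw [h2, sub_self, mul_zero] at hd2
        have : d2 = 0 := by
          have := le_antisymm hd2 (sq_nonneg d2)
          exact pow_eq_zero_iff (two_ne_zero) |>.1 this
        rw [h2, this]; simpa using hd10
      · have hs : c (k + 1) - cs ∈ Set.Ioo 0 η := ⟨by linarith, (hmem (k + 1) (by omega)).2⟩
        obtain ⟨hder, hpos⟩ := hφd _ hs
        have hK := hkl (x (k + 1)) (hOb (by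
            rw [Metric.mem_ball, dist_eq_norm]; exact hk1.trans_le (min_le_right _ _)))
          (by rw [hFx, hFxh]; exact_mod_cast hlt)
          (by rw [hFx, hFxh]; exact_mod_cast hN0 (k + 1) (by omega))
        rw [hFx, hFxh, EReal.toReal_coe, EReal.toReal_coe] at hK
        set s := φ' (c (k + 1) - cs) with hsdef
        have hre := hrel (x k) (x (k + 1)) (hk0.trans_le (min_le_left _ _))
          (hk1.trans_le (min_le_left _ _)) (hdom _).2 (hdom _).2 (c k) (c (k + 1)) (α k)
          (hc k) (hc (k + 1)) (hc0 k) (hanti (Nat.zero_le k)) (hα k).1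
        have hinf : Metric.infEDist 0 (lsub (Ffrac f g h) (x (k + 1))) ≤ ENNReal.ofReal (B * d1) := by
          refine (Metric.infEDist_le_edist_of_mem (hsubg k)).trans ?_
          rw [edist_dist, dist_zero_left]
          exact ENNReal.ofReal_le_ofReal hre
        have hK2 : 1 ≤ s * (B * d1) := by
          have h1 : (1 : ENNReal) ≤ ENNReal.ofReal s * ENNReal.ofReal (B * d1) :=
            hK.trans (mul_le_mul_right hinf _)
          rw [← ENNReal.ofReal_mul hpos.le] at h1
          exact ENNReal.one_le_ofReal.1 h1
        have hconc : s * (c (k + 1) - c (k + 2)) ≤ φ (c (k + 1) - cs) - φ (c (k + 2) - cs) := by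
          rcases hc12.eq_or_lt with h2 | h2
          · rw [h2]; simp
          · have h3 : c (k + 2) - cs < c (k + 1) - cs := by linarith
            have := hφconc.le_slope_of_hasDerivAt (hmem (k + 2) (by omega)) (hmem (k + 1) (by omega))
              h3 hder
            rw [slope_def_field, le_div_iff₀ (by linarith)] at this
            linarith
        set Δ := φ (c (k + 1) - cs) - φ (c (k + 2) - cs) with hΔ
        have hδ : 0 ≤ c (k + 1) - c (k + 2) := by linarith
        have hΔ0 : 0 ≤ Δ := (mul_nonneg hpos.le hδ).trans hconc
        have hMa : 0 < M / a := by positivity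
        have hq : d2 ^ 2 ≤ d1 * (M / a * B * Δ) := by
          calc d2 ^ 2 ≤ M / a * (c (k + 1) - c (k + 2)) := hd2
            _ ≤ M / a * ((s * (B * d1)) * (c (k + 1) - c (k + 2))) := by
              refine mul_le_mul_of_nonneg_left ?_ hMa.le
              nlinarith
            _ = M / a * B * d1 * (s * (c (k + 1) - c (k + 2))) := by ring
            _ ≤ M / a * B * d1 * Δ := by gcongr
            _ = _ := by ring
        have hT : 0 ≤ M / a * B * Δ := by positivity
        exact amgm_step d1 d2 _ hd10 hT hq
  refine ⟨hsum, xh, ?_⟩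
  have hconv : Tendsto x atTop (𝓝 xh) := by
    have hcau : CauchySeq x := by
      refine cauchySeq_of_summable_dist ?_
      refine hsum.congr fun k => ?_
      rw [dist_comm, dist_eq_norm]
    exact tendsto_nhds_of_cauchySeq_of_subseq hcau hθ.tendsto_atTop hxθ
  refine ⟨hconv, ⟨hgxh0, hfxh⟩, ?_⟩
  rw [hFxh, EReal.toReal_coe]
  have hconv1 : Tendsto (fun k => x (k + 1)) atTop (𝓝 xh) := hconv.comp (tendsto_add_atTop_nat 1)
  have hlimit : ∀ z, f z ≠ ⊤ → (f xh).toReal ≤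
      (f z).toReal + 1 / (2 * αlo) * ‖z - xh‖ ^ 2 + ⟪h' xh - cs • g' xh, z - xh⟫ := by
    intro z hz
    have hg'lim : Tendsto (fun k => g' (x k)) atTop (𝓝 (g' xh)) :=
      (hA4_cont xh hgxh0).tendsto.comp
        (tendsto_nhdsWithin_iff.2 ⟨hconv, Eventually.of_forall fun k => (hdom k).1⟩)
    have hh'lim : Tendsto (fun k => h' (x k)) atTop (𝓝 (h' xh)) :=
      (hh_lip.continuous.tendsto xh).comp hconv
    have hp : Tendsto (fun k => h' (x k) - c k • g' (x k)) atTop (𝓝 (h' xh - cs • g' xh)) :=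
      hh'lim.sub (hcs.smul hg'lim)
    have hL1 : Tendsto (fun k => (f (x (k + 1))).toReal +
        ⟪h' (x k) - c k • g' (x k), x (k + 1) - x k⟫) atTop
        (𝓝 ((f xh).toReal + ⟪h' xh - cs • g' xh, xh - xh⟫)) :=
      (hfcont _ hconv1 (fun j => (hdom (j + 1)).2)).add (hp.inner (hconv1.sub hconv))
    have hR1 : Tendsto (fun k => (f z).toReal + 1 / (2 * αlo) * ‖z - x k‖ ^ 2 +
        ⟪h' (x k) - c k • g' (x k), z - x k⟫) atTop
        (𝓝 ((f z).toReal + 1 / (2 * αlo) * ‖z - xh‖ ^ 2 + ⟪h' xh - cs • g' xh, z - xh⟫)) :=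
      (tendsto_const_nhds.add ((((tendsto_const_nhds.sub hconv).norm).pow 2).const_mul _)).add
        (hp.inner (tendsto_const_nhds.sub hconv))
    have := le_of_tendsto_of_tendsto' hL1 hR1 ?_
    · simpa using this
    · intro k
      have h1 := (hprox k (hdom k).2).2 z hz
      rw [hyg k] at h1
      have h2 : 1 / (2 * α k) * ‖z - x k‖ ^ 2 ≤ 1 / (2 * αlo) * ‖z - x k‖ ^ 2 := by
        have := (hα k).1
        gcongr
      have h3 : 0 ≤ 1 / (2 * α k) * ‖x (k + 1) - x k‖ ^ 2 := by
        have := hαpos k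
        positivity
      linarith
  refine fsub_of_eventually f hf_ne_bot _ _ hfxh ?_
  intro ε hε
  have E : ∀ᶠ z in 𝓝 xh, 1 / (2 * αlo) * ‖z - xh‖ < ε := by
    have : Tendsto (fun z => 1 / (2 * αlo) * ‖z - xh‖) (𝓝 xh)
        (𝓝 (1 / (2 * αlo) * ‖xh - xh‖)) := by
      apply Continuous.tendsto (f := fun z => 1 / (2 * αlo) * ‖z - xh‖); fun_prop
    refine this.eventually_lt_const ?_
    simpa using hε
  filter_upwards [E] with z hz hfz
  have h1 := hlimit z hfz
  have h2 : ⟪cs • g' xh - h' xh, z - xh⟫ = -⟪h' xh - cs • g' xh, z - xh⟫ := by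
    rw [← inner_neg_left, neg_sub]
  have h3 := mul_le_mul_of_nonneg_right hz.le (norm_nonneg (z - xh))
  rw [h2]
  nlinarith
end
end
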